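/- Satisfiability and subsumption of SHIQ-concepts with respect to terminologies and role hierarchies are decidable: over a fixed countable effectively encoded signature, there is a computable function that, given a SHIQ-concept C, a terminology T, and a finite set R of role inclusion axioms, returns true if and only if C is satisfiable with respect to T and R⁺ (and hence also a computable function deciding whether D subsumes C with respect to T and R⁺). -/

import Mathlib

/-- SHIQ-roles: role names (indexed by ℕ) and their inverses. -/
inductive Role where
  | atom : ℕ → Role
  | inv  : ℕ → Role
deriving DecidableEq

/-- The function `Inv` on roles: `Inv(R) = R⁻`, `Inv(R⁻) = R`. -/
def Role.Inv : Role → Role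
  | .atom r => .inv r
  | .inv r  => .atom r

/-- The underlying role name of a (possibly inverse) role. -/
def Role.name : Role → ℕ
  | .atom r => r
  | .inv r  => r

/-- Concepts of the SHIQ family (with ⊤ and ⊥ for convenience). -/
inductive DLConcept where
  | top : DLConcept
  | bot : DLConcept
  | atom : ℕ → DLConcept
  | neg : DLConcept → DLConcept
  | and : DLConcept → DLConcept → DLConcept
  | or : DLConcept → DLConcept → DLConcept
  | all : Role → DLConcept → DLConcept
  | ex : Role → DLConcept → DLConcept
  | atleast : ℕ → Role → DLConcept → DLConcept
  | atmost : ℕ → Role → DLConcept → DLConcept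
deriving DecidableEq

/-- An interpretation: a (nonempty) domain, a valuation of concept names and
    of role names. -/
structure Interp where
  Dom : Type
  dom_nonempty : Nonempty Dom
  cI : ℕ → Set Dom
  rI : ℕ → Dom → Dom → Prop

/-- Semantics of (possibly inverse) roles. -/
def Interp.rSem (I : Interp) : Role → I.Dom → I.Dom → Prop
  | .atom r => I.rI r
  | .inv r  => fun x y => I.rI r y x

/-- Semantics of concepts; number restrictions are interpreted by counting
    role successors (via cardinalities, so that infinite sets are handled
    correctly). -/
def Interp.cSem (I : Interp) : DLConcept → Set I.Dom
  | .top => Set.univ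
  | .bot => ∅
  | .atom a => I.cI a
  | .neg C => (I.cSem C)ᶜ
  | .and C D => I.cSem C ∩ I.cSem D
  | .or C D => I.cSem C ∪ I.cSem D
  | .all R C => {x | ∀ y, I.rSem R x y → y ∈ I.cSem C}
  | .ex R C => {x | ∃ y, I.rSem R x y ∧ y ∈ I.cSem C}
  | .atleast n R C => {x | (n : Cardinal) ≤ Cardinal.mk {y // I.rSem R x y ∧ y ∈ I.cSem C}}
  | .atmost n R C => {x | Cardinal.mk {y // I.rSem R x y ∧ y ∈ I.cSem C} ≤ (n : Cardinal)}

/-- `I.Good Rp`: the interpretation interprets every transitive role name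
    (member of `Rp`) by a transitive relation. -/
def Interp.Good (I : Interp) (Rp : Set ℕ) : Prop :=
  ∀ r ∈ Rp, Transitive (I.rI r)

/-- The role hierarchy ⊑* generated by a finite set of role inclusion axioms:
    inverses are added and the transitive-reflexive closure is taken. -/
def SubRole (RIA : List (Role × Role)) : Role → Role → Prop :=
  Relation.ReflTransGen (fun R S => (R, S) ∈ RIA ∨ (R.Inv, S.Inv) ∈ RIA)

/-- `I ⊨ R⁺`: the interpretation satisfies the role hierarchy. -/
def Interp.ModelsRH (I : Interp) (RIA : List (Role × Role)) : Prop :=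
  ∀ R S, SubRole RIA R S → ∀ x y, I.rSem R x y → I.rSem S x y

/-- `Trans(R)`: a (possibly inverse) role is transitive iff its name is in `Rp`. -/
def RTrans (Rp : Set ℕ) : Role → Prop
  | .atom r => r ∈ Rp
  | .inv r  => r ∈ Rp

/-- A role is simple iff it is neither transitive nor has a transitive sub-role. -/
def SimpleRole (Rp : Set ℕ) (RIA : List (Role × Role)) (R : Role) : Prop :=
  ∀ S, SubRole RIA S R → ¬ RTrans Rp S

/-- SHIQ-concepts: number restrictions occur only on simple roles. -/
def DLConcept.IsSHIQ (Rp : Set ℕ) (RIA : List (Role × Role)) : DLConcept → Prop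
  | .top | .bot | .atom _ => True
  | .neg C => C.IsSHIQ Rp RIA
  | .and C D | .or C D => C.IsSHIQ Rp RIA ∧ D.IsSHIQ Rp RIA
  | .all _ C | .ex _ C => C.IsSHIQ Rp RIA
  | .atleast _ R C | .atmost _ R C => SimpleRole Rp RIA R ∧ C.IsSHIQ Rp RIA

/-- Satisfiability of a concept w.r.t. a role hierarchy. -/
def Satisfiable (Rp : Set ℕ) (RIA : List (Role × Role)) (C : DLConcept) : Prop :=
  ∃ I : Interp, I.Good Rp ∧ I.ModelsRH RIA ∧ (I.cSem C).Nonempty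

/-- Subsumption of concepts w.r.t. a role hierarchy. -/
def Subsumes (Rp : Set ℕ) (RIA : List (Role × Role)) (C D : DLConcept) : Prop :=
  ∀ I : Interp, I.Good Rp → I.ModelsRH RIA → I.cSem C ⊆ I.cSem D
/-- A terminology: a finite list of general concept inclusion axioms `C ⊑ D`. -/
abbrev Terminology := List (DLConcept × DLConcept)

/-- `I` is a model of the terminology `T`. -/
def Interp.ModelsT (I : Interp) (T : Terminology) : Prop :=
  ∀ p ∈ T, I.cSem p.1 ⊆ I.cSem p.2

/-- Satisfiability w.r.t. a terminology and a role hierarchy. -/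
def SatisfiableT (Rp : Set ℕ) (RIA : List (Role × Role)) (T : Terminology)
    (C : DLConcept) : Prop :=
  ∃ I : Interp, I.Good Rp ∧ I.ModelsRH RIA ∧ I.ModelsT T ∧ (I.cSem C).Nonempty

/-- Subsumption w.r.t. a terminology and a role hierarchy. -/
def SubsumesT (Rp : Set ℕ) (RIA : List (Role × Role)) (T : Terminology)
    (C D : DLConcept) : Prop :=
  ∀ I : Interp, I.Good Rp → I.ModelsRH RIA → I.ModelsT T → I.cSem C ⊆ I.cSem D

/-- `C_T`: the conjunction of all `¬Cᵢ ⊔ Dᵢ` for `Cᵢ ⊑ Dᵢ ∈ T`. -/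
def CT (T : Terminology) : DLConcept :=
  T.foldr (fun p acc => DLConcept.and (DLConcept.or (DLConcept.neg p.1) p.2) acc) DLConcept.top

/-- The role names occurring in a concept. -/
def DLConcept.roleNames : DLConcept → Finset ℕ
  | .top | .bot | .atom _ => ∅
  | .neg C => C.roleNames
  | .and C D | .or C D => C.roleNames ∪ D.roleNames
  | .all R C | .ex R C => insert R.name C.roleNames
  | .atleast _ R C | .atmost _ R C => insert R.name C.roleNames

/-- The role names occurring in a terminology. -/
def termRoleNames (T : Terminology) : Finset ℕ :=
  T.foldr (fun p acc => p.1.roleNames ∪ p.2.roleNames ∪ acc) ∅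

/-- The role names occurring in a set of role inclusion axioms. -/
def riaRoleNames (RIA : List (Role × Role)) : Finset ℕ :=
  RIA.foldr (fun p acc => insert p.1.name (insert p.2.name acc)) ∅

/-- `R_U`: the given role inclusion axioms extended with `R ⊑ U` and
    `Inv(R) ⊑ U` for every role (name) `r` in `names`. -/
def addU (RIA : List (Role × Role)) (names : Finset ℕ) (u : ℕ) : List (Role × Role) :=
  RIA ++ (names.sort (· ≤ ·)).map (fun r => (Role.atom r, Role.atom u))
      ++ (names.sort (· ≤ ·)).map (fun r => (Role.inv r, Role.atom u))

/-- An effective encoding of roles. -/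
def Role.code : Role → ℕ
  | .atom n => 2 * n
  | .inv n => 2 * n + 1

/-- An effective encoding of concepts. -/
def DLConcept.code : DLConcept → ℕ
  | .top => Nat.pair 0 0
  | .bot => Nat.pair 1 0
  | .atom a => Nat.pair 2 a
  | .neg C => Nat.pair 3 C.code
  | .and C D => Nat.pair 4 (Nat.pair C.code D.code)
  | .or C D => Nat.pair 5 (Nat.pair C.code D.code)
  | .all R C => Nat.pair 6 (Nat.pair R.code C.code)
  | .ex R C => Nat.pair 7 (Nat.pair R.code C.code)
  | .atleast n R C => Nat.pair 8 (Nat.pair n (Nat.pair R.code C.code))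
  | .atmost n R C => Nat.pair 9 (Nat.pair n (Nat.pair R.code C.code))

/-- An effective encoding of lists of naturals. -/
def natListCode : List ℕ → ℕ
  | [] => 0
  | a :: l => Nat.pair a (natListCode l) + 1

/-- An effective encoding of finite sets of role inclusion axioms. -/
def riaCode (RIA : List (Role × Role)) : ℕ :=
  natListCode (RIA.map fun p => Nat.pair p.1.code p.2.code)

/-- The fixed set of transitive role names: the even role names (so that both the
transitive role names and the other role names form countably infinite,
effectively decidable sets). -/
def evenRp : Set ℕ := {n | n % 2 = 0}

/-- An effective encoding of terminologies. -/
def termCode (T : Terminology) : ℕ :=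
  natListCode (T.map fun p => Nat.pair p.1.code p.2.code)

/-!
Call the *star* of an element `x` of a model the set of relevant concepts to which `x` belongs,
together with the relevant roles to, and concepts of, finitely many neighbours of `x`: enough of
them to witness the quantified concepts and to decide the number restrictions. Up to coding there
are finitely many stars, and those of the elements of a model form a *mosaic*: each is locally
consistent, and each neighbour it describes is the centre of a star of the set that describes the
same pair of elements from the other end.

Conversely, a mosaic unravels into a tree in which every node carries a star and its neighbours are
exactly the nodes in the slots of that star. Transitivity of roles is not yet enforced on this tree;
instead, local consistency propagates `∀ S.C` along an edge labelled with a transitive sub-role `Q`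
of `S` as `∀ Q.C`. Adding the paths labelled with transitive sub-roles turns the tree into a model;
number restrictions survive this closure because they concern simple roles only. Hence
satisfiability amounts to a bounded search for a mosaic.
-/

/-! ### Roles -/

@[simp]
theorem Role.Inv_Inv (R : Role) : R.Inv.Inv = R := by cases R <;> rfl

theorem RTrans.Inv {Rp : Set ℕ} {R : Role} (h : RTrans Rp R) : RTrans Rp R.Inv := by
  cases R <;> exact h

theorem SubRole.Inv {RIA : List (Role × Role)} {R S : Role} (h : SubRole RIA R S) :
    SubRole RIA R.Inv S.Inv :=
  Relation.ReflTransGen.lift Role.Inv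
    (fun R S hstep => by simpa [Function.onFun] using Or.symm hstep) R S h

theorem Interp.rSem_Inv (I : Interp) {R : Role} {x y : I.Dom} :
    I.rSem R.Inv x y ↔ I.rSem R y x := by
  cases R <;> rfl

theorem Interp.Good.rSem_trans {I : Interp} {Rp : Set ℕ} (hI : I.Good Rp) {R : Role}
    (hR : RTrans Rp R) {x y z : I.Dom} (hxy : I.rSem R x y) (hyz : I.rSem R y z) :
    I.rSem R x z := by
  cases R with
  | atom r => exact hI r hR hxy hyz
  | inv r => exact hI r hR hyz hxy

/-! ### Tableaux -/

/-- `ImmediateSub C D`: the concept `C` is an argument of the outermost constructor of `D`. -/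
inductive DLConcept.ImmediateSub : DLConcept → DLConcept → Prop
  | neg (C : DLConcept) : ImmediateSub C (.neg C)
  | and_left (C D : DLConcept) : ImmediateSub C (.and C D)
  | and_right (C D : DLConcept) : ImmediateSub D (.and C D)
  | or_left (C D : DLConcept) : ImmediateSub C (.or C D)
  | or_right (C D : DLConcept) : ImmediateSub D (.or C D)
  | all (R : Role) (C : DLConcept) : ImmediateSub C (.all R C)
  | ex (R : Role) (C : DLConcept) : ImmediateSub C (.ex R C)
  | atleast (n : ℕ) (R : Role) (C : DLConcept) : ImmediateSub C (.atleast n R C)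
  | atmost (n : ℕ) (R : Role) (C : DLConcept) : ImmediateSub C (.atmost n R C)

/-- A tableau: a graph with edges `E`, labelled with sets of concepts `L`, whose labels are locally
consistent on the concepts in `cl`. Transitivity of roles is not required of the edges; the fields
`all_trans` and `ex_trans` propagate quantified concepts along the edges instead. -/
structure IsTableau (Rp : Set ℕ) (RIA : List (Role × Role)) (T : Terminology)
    (cl : Set DLConcept) {V : Type} (E : Role → V → V → Prop) (L : V → Set DLConcept) : Prop where
  edge_inv {R : Role} {x y : V} : E R x y → E R.Inv y x
  edge_sub {R S : Role} {x y : V} : SubRole RIA R S → E R x y → E S x y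
  tbox {C D : DLConcept} {x : V} : (C, D) ∈ T → C ∈ L x → D ∈ L x
  top (x : V) : .top ∈ L x
  bot (x : V) : .bot ∉ L x
  neg {C : DLConcept} {x : V} : .neg C ∈ cl → (.neg C ∈ L x ↔ C ∉ L x)
  and {C D : DLConcept} {x : V} : .and C D ∈ cl → (.and C D ∈ L x ↔ C ∈ L x ∧ D ∈ L x)
  or {C D : DLConcept} {x : V} : .or C D ∈ cl → (.or C D ∈ L x ↔ C ∈ L x ∨ D ∈ L x)
  all_step {R : Role} {C : DLConcept} {x y : V} :
    C ∈ cl → E R x y → .all R C ∈ L x → C ∈ L y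
  ex_step {R : Role} {C : DLConcept} {x y : V} :
    C ∈ cl → E R x y → C ∈ L y → .ex R C ∈ L x
  all_trans {Q S : Role} {C : DLConcept} {x y : V} : C ∈ cl → RTrans Rp Q → SubRole RIA Q S →
    E Q x y → .all S C ∈ L x → .all Q C ∈ L y
  ex_trans {Q S : Role} {C : DLConcept} {x y : V} : C ∈ cl → RTrans Rp Q → SubRole RIA Q S →
    E Q x y → .ex Q C ∈ L y → .ex S C ∈ L x
  all_witness {R : Role} {C : DLConcept} {x : V} : .all R C ∈ cl → .all R C ∉ L x →
    ∃ y, E R x y ∧ C ∉ L y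
  ex_witness {R : Role} {C : DLConcept} {x : V} : .ex R C ∈ cl → .ex R C ∈ L x →
    ∃ y, E R x y ∧ C ∈ L y
  atleast {n : ℕ} {R : Role} {C : DLConcept} {x : V} : .atleast n R C ∈ cl →
    (.atleast n R C ∈ L x ↔ (n : Cardinal) ≤ Cardinal.mk {y // E R x y ∧ C ∈ L y})
  atmost {n : ℕ} {R : Role} {C : DLConcept} {x : V} : .atmost n R C ∈ cl →
    (.atmost n R C ∈ L x ↔ Cardinal.mk {y // E R x y ∧ C ∈ L y} ≤ (n : Cardinal))

/-- The interpretation of the role `R` induced by the edges of a tableau: edges are added along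
paths labelled with a transitive sub-role of `R`. -/
def edgeClosure (Rp : Set ℕ) (RIA : List (Role × Role)) {V : Type} (E : Role → V → V → Prop)
    (R : Role) (x y : V) : Prop :=
  E R x y ∨ ∃ Q, RTrans Rp Q ∧ SubRole RIA Q R ∧ Relation.TransGen (E Q) x y

/-- The interpretation induced by a tableau. -/
def tableauInterp (Rp : Set ℕ) (RIA : List (Role × Role)) {V : Type} [Nonempty V]
    (E : Role → V → V → Prop) (L : V → Set DLConcept) : Interp where
  Dom := V
  dom_nonempty := ‹_›
  cI a := {x | .atom a ∈ L x}
  rI r := edgeClosure Rp RIA E (.atom r)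

theorem edgeClosure_iff_of_simple {Rp : Set ℕ} {RIA : List (Role × Role)} {V : Type}
    {E : Role → V → V → Prop} {R : Role} (hR : SimpleRole Rp RIA R) {x y : V} :
    edgeClosure Rp RIA E R x y ↔ E R x y :=
  or_iff_left fun ⟨Q, hQ, hQR, _⟩ => hR Q hQR hQ

namespace IsTableau

variable {Rp : Set ℕ} {RIA : List (Role × Role)} {T : Terminology} {cl : Set DLConcept}
  {V : Type} {E : Role → V → V → Prop} {L : V → Set DLConcept}

theorem edgeClosure_inv (h : IsTableau Rp RIA T cl E L) {R : Role} {x y : V}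
    (hxy : edgeClosure Rp RIA E R x y) : edgeClosure Rp RIA E R.Inv y x := by
  rcases hxy with hxy | ⟨Q, hQ, hQR, hpath⟩
  · exact .inl (h.edge_inv hxy)
  · refine .inr ⟨Q.Inv, hQ.Inv, hQR.Inv, ?_⟩
    exact Relation.TransGen.mono (fun _ _ he => h.edge_inv he) y x (Relation.transGen_swap.2 hpath)

theorem rSem_iff [Nonempty V] (h : IsTableau Rp RIA T cl E L) {R : Role} {x y : V} :
    (tableauInterp Rp RIA E L).rSem R x y ↔ edgeClosure Rp RIA E R x y := by
  cases R with
  | atom r => rfl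
  | inv r => exact ⟨h.edgeClosure_inv, h.edgeClosure_inv⟩

theorem modelsRH [Nonempty V] (h : IsTableau Rp RIA T cl E L) :
    (tableauInterp Rp RIA E L).ModelsRH RIA := by
  refine fun R S hRS x y hxy => h.rSem_iff.2 ?_
  rcases h.rSem_iff.1 hxy with he | ⟨Q, hQ, hQR, hpath⟩
  · exact .inl (h.edge_sub hRS he)
  · exact .inr ⟨Q, hQ, hQR.trans hRS, hpath⟩

theorem transGen_of_edgeClosure (h : IsTableau Rp RIA T cl E L) {R : Role} {x y : V}
    (hxy : edgeClosure Rp RIA E R x y) : Relation.TransGen (E R) x y := by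
  rcases hxy with hxy | ⟨Q, -, hQR, hpath⟩
  · exact .single hxy
  · exact Relation.TransGen.mono (fun _ _ => h.edge_sub hQR) x y hpath

theorem good [Nonempty V] (h : IsTableau Rp RIA T cl E L) :
    (tableauInterp Rp RIA E L).Good Rp := fun r hr _ _ _ hxy hyz =>
  .inr ⟨.atom r, hr, .refl, (h.transGen_of_edgeClosure hxy).trans (h.transGen_of_edgeClosure hyz)⟩

theorem all_path (h : IsTableau Rp RIA T cl E L) {Q S : Role} {C : DLConcept} {x y : V}
    (hC : C ∈ cl) (hQ : RTrans Rp Q) (hQS : SubRole RIA Q S) (hpath : Relation.TransGen (E Q) x y)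
    (hx : .all S C ∈ L x) : C ∈ L y ∧ .all Q C ∈ L y := by
  induction hpath with
  | single he => exact ⟨h.all_step hC (h.edge_sub hQS he) hx, h.all_trans hC hQ hQS he hx⟩
  | tail _ he ih => exact ⟨h.all_step hC he ih.2, h.all_trans hC hQ .refl he ih.2⟩

theorem ex_path (h : IsTableau Rp RIA T cl E L) {Q S : Role} {C : DLConcept} {x y : V}
    (hC : C ∈ cl) (hQ : RTrans Rp Q) (hQS : SubRole RIA Q S) (hpath : Relation.TransGen (E Q) x y)
    (hy : C ∈ L y) : .ex S C ∈ L x := by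
  suffices .ex S C ∈ L x ∧ .ex Q C ∈ L x from this.1
  induction hpath using Relation.TransGen.head_induction_on with
  | single he =>
    exact ⟨h.ex_step hC (h.edge_sub hQS he) hy, h.ex_step hC he hy⟩
  | head he _ ih => exact ⟨h.ex_trans hC hQ hQS he ih.2, h.ex_trans hC hQ .refl he ih.2⟩

theorem all_mem_iff (h : IsTableau Rp RIA T cl E L) {R : Role} {C : DLConcept} {x : V}
    (hC : C ∈ cl) (hRC : .all R C ∈ cl) :
    .all R C ∈ L x ↔ ∀ y, edgeClosure Rp RIA E R x y → C ∈ L y := by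
  constructor
  · rintro hx y (he | ⟨Q, hQ, hQR, hpath⟩)
    · exact h.all_step hC he hx
    · exact (h.all_path hC hQ hQR hpath hx).1
  · intro hall
    by_contra hx
    obtain ⟨y, he, hy⟩ := h.all_witness hRC hx
    exact hy (hall y (.inl he))

theorem ex_mem_iff (h : IsTableau Rp RIA T cl E L) {R : Role} {C : DLConcept} {x : V}
    (hC : C ∈ cl) (hRC : .ex R C ∈ cl) :
    .ex R C ∈ L x ↔ ∃ y, edgeClosure Rp RIA E R x y ∧ C ∈ L y := by
  constructor
  · intro hx
    obtain ⟨y, he, hy⟩ := h.ex_witness hRC hx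
    exact ⟨y, .inl he, hy⟩
  · rintro ⟨y, he | ⟨Q, hQ, hQR, hpath⟩, hy⟩
    · exact h.ex_step hC he hy
    · exact h.ex_path hC hQ hQR hpath hy

theorem mk_successors [Nonempty V] (h : IsTableau Rp RIA T cl E L) {R : Role} {C : DLConcept}
    {x : V} (hR : SimpleRole Rp RIA R) (hC : ∀ y, y ∈ (tableauInterp Rp RIA E L).cSem C ↔ C ∈ L y) :
    Cardinal.mk {y // (tableauInterp Rp RIA E L).rSem R x y ∧
      y ∈ (tableauInterp Rp RIA E L).cSem C} = Cardinal.mk {y // E R x y ∧ C ∈ L y} :=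
  Cardinal.mk_congr <| Equiv.subtypeEquivRight fun y =>
    and_congr (h.rSem_iff.trans (edgeClosure_iff_of_simple hR)) (hC y)

theorem mem_cSem_iff [Nonempty V] (h : IsTableau Rp RIA T cl E L)
    (hcl : ∀ ⦃C D : DLConcept⦄, C.ImmediateSub D → D ∈ cl → C ∈ cl) {C : DLConcept}
    (hC : C.IsSHIQ Rp RIA) (hCcl : C ∈ cl) (x : V) :
    x ∈ (tableauInterp Rp RIA E L).cSem C ↔ C ∈ L x := by
  induction C generalizing x with
  | top => exact iff_of_true trivial (h.top x)
  | bot => exact iff_of_false (Set.notMem_empty x) (h.bot x)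
  | atom a => rfl
  | neg C ih => exact (not_congr (ih hC (hcl (.neg C) hCcl) x)).trans (h.neg hCcl).symm
  | and C D ihC ihD =>
    exact (and_congr (ihC hC.1 (hcl (.and_left C D) hCcl) x)
      (ihD hC.2 (hcl (.and_right C D) hCcl) x)).trans (h.and hCcl).symm
  | or C D ihC ihD =>
    exact (or_congr (ihC hC.1 (hcl (.or_left C D) hCcl) x)
      (ihD hC.2 (hcl (.or_right C D) hCcl) x)).trans (h.or hCcl).symm
  | all R C ih =>
    have hsub := hcl (.all R C) hCcl
    exact (forall_congr' fun y => imp_congr h.rSem_iff (ih hC hsub y)).trans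
      (h.all_mem_iff hsub hCcl).symm
  | ex R C ih =>
    have hsub := hcl (.ex R C) hCcl
    exact (exists_congr fun y => and_congr h.rSem_iff (ih hC hsub y)).trans
      (h.ex_mem_iff hsub hCcl).symm
  | atleast n R C ih =>
    rw [h.atleast hCcl, ← h.mk_successors hC.1 (ih hC.2 (hcl (.atleast n R C) hCcl))]
    rfl
  | atmost n R C ih =>
    rw [h.atmost hCcl, ← h.mk_successors hC.1 (ih hC.2 (hcl (.atmost n R C) hCcl))]
    rfl

theorem satisfiableT (h : IsTableau Rp RIA T cl E L)
    (hcl : ∀ ⦃C D : DLConcept⦄, C.ImmediateSub D → D ∈ cl → C ∈ cl)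
    (hT : ∀ p ∈ T, p.1.IsSHIQ Rp RIA ∧ p.2.IsSHIQ Rp RIA) (hTcl : ∀ p ∈ T, p.1 ∈ cl ∧ p.2 ∈ cl)
    {C : DLConcept} (hC : C.IsSHIQ Rp RIA) (hCcl : C ∈ cl) {x : V} (hx : C ∈ L x) :
    SatisfiableT Rp RIA T C := by
  have : Nonempty V := ⟨x⟩
  refine ⟨tableauInterp Rp RIA E L, h.good, h.modelsRH, fun p hp y hy => ?_, x,
    (h.mem_cSem_iff hcl hC hCcl x).2 hx⟩
  have hmem : p.1 ∈ L y := (h.mem_cSem_iff hcl (hT p hp).1 (hTcl p hp).1 y).1 hy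
  exact (h.mem_cSem_iff hcl (hT p hp).2 (hTcl p hp).2 y).2 (h.tbox hp hmem)

end IsTableau

/-! ### Unravelling -/

section Unravelling

universe u v

variable {S : Type u} {ι : Type v} (Match : S → ι → S → ι → Prop) (s₀ : S)

open Classical in
/-- The star at a node of the tree obtained by gluing stars along matching slots, together with the
slot pointing back to the parent. Nodes are words of slots; a word that does not describe a path
from the root becomes an additional root carrying the star `s₀`. -/
noncomputable def unravelNode : List ι → S × Option ι
  | [] => (s₀, none)
  | i :: x =>
    if h : (∃ p : S × ι, Match (unravelNode x).1 i p.1 p.2) ∧ (unravelNode x).2 ≠ some i then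
      (h.1.choose.1, some h.1.choose.2)
    else (s₀, none)

open Classical in
/-- The neighbour of a node of the unravelling in a given slot. -/
noncomputable def unravelNb (x : List ι) (i : ι) : List ι :=
  if (unravelNode Match s₀ x).2 = some i then x.tail else i :: x

theorem unravelNb_injective (x : List ι) : Function.Injective (unravelNb Match s₀ x) := by
  have tail_ne (k : ι) : x.tail ≠ k :: x := fun h => by simpa using congrArg List.length h
  intro i j hij
  unfold unravelNb at hij
  split_ifs at hij with hi hj hj
  · exact Option.some_injective _ (hi.symm.trans hj)
  · exact absurd hij (tail_ne j)
  · exact absurd hij.symm (tail_ne i)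
  · exact (List.cons.inj hij).1

variable {Match s₀}

theorem unravelNode_cons {x : List ι} {i j : ι} (h : (unravelNode Match s₀ (i :: x)).2 = some j) :
    Match (unravelNode Match s₀ x).1 i (unravelNode Match s₀ (i :: x)).1 j ∧
      unravelNb Match s₀ x i = i :: x := by
  rw [unravelNode] at h ⊢
  split_ifs at h ⊢ with hi
  obtain rfl := Option.some_injective _ h
  exact ⟨hi.1.choose_spec, if_neg hi.2⟩

theorem exists_match_unravelNb (hsymm : ∀ ⦃s i t j⦄, Match s i t j → Match t j s i)
    {x : List ι} {i : ι} (hi : ∃ p : S × ι, Match (unravelNode Match s₀ x).1 i p.1 p.2) :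
    ∃ j, Match (unravelNode Match s₀ x).1 i (unravelNode Match s₀ (unravelNb Match s₀ x i)).1 j ∧
      unravelNb Match s₀ (unravelNb Match s₀ x i) j = x := by
  by_cases hback : (unravelNode Match s₀ x).2 = some i
  · rw [unravelNb, if_pos hback]
    cases x with
    | nil => simp [unravelNode] at hback
    | cons k y => exact ⟨k, hsymm (unravelNode_cons hback).1, (unravelNode_cons hback).2⟩
  · have hnode : (unravelNode Match s₀ (i :: x)).2 = some hi.choose.2 := by
      rw [unravelNode, dif_pos ⟨hi, hback⟩]
    rw [unravelNb, if_neg hback]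
    exact ⟨hi.choose.2, (unravelNode_cons hnode).1, if_pos hnode⟩

end Unravelling

/-! ### Codes -/

theorem natListCode_eq_encode (l : List ℕ) : natListCode l = Encodable.encode l := by
  induction l with
  | nil => rfl
  | cons a l ih => rw [natListCode, ih, Encodable.encode_list_cons]; rfl

theorem lt_natListCode_of_mem {l : List ℕ} {a : ℕ} (h : a ∈ l) : a < natListCode l := by
  induction h with
  | head l => exact Nat.lt_succ_of_le (Nat.left_le_pair _ _)
  | tail b _ ih => exact ih.trans (Nat.lt_succ_of_le (Nat.right_le_pair _ _))

namespace Role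

/-- The role with a given code. -/
def ofCode (n : ℕ) : Role := if n % 2 = 0 then .atom (n / 2) else .inv (n / 2)

/-- The operation on role codes that corresponds to `Role.Inv`. -/
def invCode (n : ℕ) : ℕ := if n % 2 = 0 then n + 1 else n - 1

@[simp]
theorem ofCode_code (R : Role) : ofCode R.code = R := by
  cases R with
  | atom n => simp [ofCode, code]
  | inv n => simp [ofCode, code, show (2 * n + 1) / 2 = n by omega]

@[simp]
theorem code_ofCode (n : ℕ) : (ofCode n).code = n := by
  unfold ofCode
  split_ifs <;> simp only [code] <;> omega

theorem code_Inv (R : Role) : R.Inv.code = invCode R.code := by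
  cases R <;> simp [Inv, code, invCode]

theorem invCode_invCode (n : ℕ) : invCode (invCode n) = n := by
  unfold invCode
  split_ifs <;> omega

theorem invCode_le (n : ℕ) : invCode n ≤ n + 1 := by
  unfold invCode
  split_ifs <;> omega

theorem invCode_lt {M n : ℕ} (hM : Even M) (hn : n < M) : invCode n < M := by
  unfold invCode
  grind

theorem ofCode_invCode (n : ℕ) : ofCode (invCode n) = (ofCode n).Inv := by
  rw [← ofCode_code (ofCode n).Inv, code_Inv, code_ofCode]

end Role

theorem rTrans_iff_code_div_two_mem {Rp : Set ℕ} {R : Role} :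
    RTrans Rp R ↔ R.code / 2 ∈ Rp := by
  cases R with
  | atom n => simp [RTrans, Role.code]
  | inv n => simp [RTrans, Role.code, show (2 * n + 1) / 2 = n by omega]

/-- The list of codes of the axioms in a set of role inclusion axioms. -/
def riaCodes (RIA : List (Role × Role)) : List ℕ :=
  RIA.map fun p => Nat.pair p.1.code p.2.code

theorem pair_mem_riaCodes {RIA : List (Role × Role)} {r s : ℕ} :
    Nat.pair r s ∈ riaCodes RIA ↔ (Role.ofCode r, Role.ofCode s) ∈ RIA := by
  constructor
  · intro h
    obtain ⟨p, hp, hrs⟩ := List.mem_map.1 h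
    obtain ⟨rfl, rfl⟩ := Nat.pair_eq_pair.1 hrs
    simpa using hp
  · intro h
    exact List.mem_map.2 ⟨_, h, by simp⟩

/-- The role hierarchy generated by a list of codes of role inclusion axioms, on codes of roles. -/
def SubRoleCode (H : List ℕ) : ℕ → ℕ → Prop :=
  Relation.ReflTransGen fun r s =>
    Nat.pair r s ∈ H ∨ Nat.pair (Role.invCode r) (Role.invCode s) ∈ H

theorem subRoleCode_iff {RIA : List (Role × Role)} {r s : ℕ} :
    SubRoleCode (riaCodes RIA) r s ↔ SubRole RIA (Role.ofCode r) (Role.ofCode s) := by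
  constructor
  · refine fun h => Relation.ReflTransGen.lift Role.ofCode (fun r s hstep => ?_) r s h
    simpa [Function.onFun, pair_mem_riaCodes, Role.ofCode_invCode] using hstep
  · intro h
    have hlift := Relation.ReflTransGen.lift (p := fun r s => Nat.pair r s ∈ riaCodes RIA ∨
      Nat.pair (Role.invCode r) (Role.invCode s) ∈ riaCodes RIA) Role.code
      (fun R S hstep => by
        simpa [Function.onFun, pair_mem_riaCodes, Role.ofCode_invCode] using hstep) _ _ h
    simpa only [SubRoleCode, Function.onFun, Role.code_ofCode] using hlift

theorem SubRole.subRoleCode {RIA : List (Role × Role)} {R S : Role} (h : SubRole RIA R S) :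
    SubRoleCode (riaCodes RIA) R.code S.code := by
  simpa only [subRoleCode_iff, Role.ofCode_code] using h

theorem SubRole.code_lt {RIA : List (Role × Role)} {M : ℕ} (hM : Even M)
    (hRIA : ∀ p ∈ RIA, p.2.code < M) {R S : Role} (h : SubRole RIA R S) (hR : R.code < M) :
    S.code < M := by
  induction h with
  | refl => exact hR
  | @tail S S' _ hstep _ =>
    rcases hstep with hstep | hstep
    · exact hRIA _ hstep
    · have hlt := Role.invCode_lt hM (hRIA _ hstep)
      rwa [Role.code_Inv, Role.invCode_invCode] at hlt

namespace DLConcept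

/-- The code of `⊤`. -/
def topCode : ℕ := Nat.pair 0 0

/-- The code of `⊥`. -/
def botCode : ℕ := Nat.pair 1 0

/-- The operation on codes that corresponds to `DLConcept.neg`. -/
def negCode (c : ℕ) : ℕ := Nat.pair 3 c

/-- The operation on codes that corresponds to `DLConcept.and`. -/
def andCode (c d : ℕ) : ℕ := Nat.pair 4 (Nat.pair c d)

/-- The operation on codes that corresponds to `DLConcept.or`. -/
def orCode (c d : ℕ) : ℕ := Nat.pair 5 (Nat.pair c d)

/-- The operation on codes that corresponds to `DLConcept.all`. -/
def allCode (r c : ℕ) : ℕ := Nat.pair 6 (Nat.pair r c)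

/-- The operation on codes that corresponds to `DLConcept.ex`. -/
def exCode (r c : ℕ) : ℕ := Nat.pair 7 (Nat.pair r c)

/-- The operation on codes that corresponds to `DLConcept.atleast`. -/
def atleastCode (n r c : ℕ) : ℕ := Nat.pair 8 (Nat.pair n (Nat.pair r c))

/-- The operation on codes that corresponds to `DLConcept.atmost`. -/
def atmostCode (n r c : ℕ) : ℕ := Nat.pair 9 (Nat.pair n (Nat.pair r c))

/-- The concept with a given code; numbers that are not codes of concepts are sent to `⊤`. -/
def ofCode (n : ℕ) : DLConcept :=
  if h : n.unpair.1 = 0 then .top else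
  have : n.unpair.2 < n := by have := Nat.unpair_add_le n; lia
  have := Nat.unpair_left_le n.unpair.2
  have := Nat.unpair_right_le n.unpair.2
  have := Nat.unpair_right_le n.unpair.2.unpair.2
  match n.unpair.1 with
  | 1 => .bot
  | 2 => .atom n.unpair.2
  | 3 => .neg (ofCode n.unpair.2)
  | 4 => .and (ofCode n.unpair.2.unpair.1) (ofCode n.unpair.2.unpair.2)
  | 5 => .or (ofCode n.unpair.2.unpair.1) (ofCode n.unpair.2.unpair.2)
  | 6 => .all (Role.ofCode n.unpair.2.unpair.1) (ofCode n.unpair.2.unpair.2)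
  | 7 => .ex (Role.ofCode n.unpair.2.unpair.1) (ofCode n.unpair.2.unpair.2)
  | 8 => .atleast n.unpair.2.unpair.1 (Role.ofCode n.unpair.2.unpair.2.unpair.1)
      (ofCode n.unpair.2.unpair.2.unpair.2)
  | 9 => .atmost n.unpair.2.unpair.1 (Role.ofCode n.unpair.2.unpair.2.unpair.1)
      (ofCode n.unpair.2.unpair.2.unpair.2)
  | _ => .top
termination_by n
decreasing_by all_goals lia

section ofCode

variable (n r c d : ℕ)

theorem ofCode_topCode : ofCode topCode = .top := by rw [topCode, ofCode]; simp

theorem ofCode_botCode : ofCode botCode = .bot := by rw [botCode, ofCode]; simp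

theorem ofCode_negCode : ofCode (negCode c) = .neg (ofCode c) := by rw [negCode, ofCode]; simp

theorem ofCode_andCode : ofCode (andCode c d) = .and (ofCode c) (ofCode d) := by
  rw [andCode, ofCode]; simp

theorem ofCode_orCode : ofCode (orCode c d) = .or (ofCode c) (ofCode d) := by
  rw [orCode, ofCode]; simp

theorem ofCode_allCode : ofCode (allCode r c) = .all (Role.ofCode r) (ofCode c) := by
  rw [allCode, ofCode]; simp

theorem ofCode_exCode : ofCode (exCode r c) = .ex (Role.ofCode r) (ofCode c) := by
  rw [exCode, ofCode]; simp

theorem ofCode_atleastCode :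
    ofCode (atleastCode n r c) = .atleast n (Role.ofCode r) (ofCode c) := by
  rw [atleastCode, ofCode]; simp

theorem ofCode_atmostCode :
    ofCode (atmostCode n r c) = .atmost n (Role.ofCode r) (ofCode c) := by
  rw [atmostCode, ofCode]; simp

end ofCode

@[simp]
theorem ofCode_code (C : DLConcept) : ofCode C.code = C := by
  induction C with
  | top => exact ofCode_topCode
  | bot => exact ofCode_botCode
  | atom a => rw [code, ofCode]; simp
  | neg C ih => exact (ofCode_negCode _).trans (by rw [ih])
  | and C D ihC ihD => exact (ofCode_andCode _ _).trans (by rw [ihC, ihD])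
  | or C D ihC ihD => exact (ofCode_orCode _ _).trans (by rw [ihC, ihD])
  | all R C ih => exact (ofCode_allCode _ _).trans (by rw [ih, Role.ofCode_code])
  | ex R C ih => exact (ofCode_exCode _ _).trans (by rw [ih, Role.ofCode_code])
  | atleast n R C ih => exact (ofCode_atleastCode _ _ _).trans (by rw [ih, Role.ofCode_code])
  | atmost n R C ih => exact (ofCode_atmostCode _ _ _).trans (by rw [ih, Role.ofCode_code])

theorem ImmediateSub.code_le {C D : DLConcept} (h : C.ImmediateSub D) : C.code ≤ D.code := by
  cases h with
  | neg | and_right | or_right | all | ex | atleast | atmost =>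
    simp only [code]
    grind [Nat.right_le_pair]
  | and_left | or_left =>
    simp only [code]
    exact (Nat.left_le_pair _ _).trans (Nat.right_le_pair _ _)

end DLConcept

/-- The list of codes of the axioms of a terminology. -/
def termCodes (T : Terminology) : List ℕ :=
  T.map fun p => Nat.pair p.1.code p.2.code

theorem pair_code_mem_termCodes {T : Terminology} {C D : DLConcept} (h : (C, D) ∈ T) :
    Nat.pair C.code D.code ∈ termCodes T :=
  List.mem_map_of_mem (f := fun p : DLConcept × DLConcept => Nat.pair p.1.code p.2.code) h

/-! ### Finite subsets and bit sets -/

theorem natPair_lt_natPair {a a' b b' : ℕ} (ha : a ≤ a') (hb : b < b') :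
    Nat.pair a b < Nat.pair a' b' := by
  refine (Nat.pair_lt_pair_right a hb).trans_le ?_
  rcases ha.eq_or_lt with rfl | ha
  · exact le_rfl
  · exact (Nat.pair_lt_pair_left b' ha).le

theorem exists_finset_card_eq_min {α : Type*} (p : α → Prop) (k : ℕ) :
    ∃ F : Finset α, (∀ y ∈ F, p y) ∧
      (F.card : Cardinal) = min (k : Cardinal) (Cardinal.mk {y // p y}) := by
  obtain ⟨F, hFp, hcard⟩ := Cardinal.le_mk_iff_exists_subset.1
    (min_le_right (k : Cardinal) (Cardinal.mk {y | p y}))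
  have hF : F.Finite := Cardinal.lt_aleph0_iff_set_finite.1
    (hcard.trans_lt ((min_le_left _ _).trans_lt (Cardinal.natCast_lt_aleph0)))
  lift F to Finset α using hF
  rw [Finset.coe_sort_coe, Cardinal.mk_coe_finset] at hcard
  exact ⟨F, fun y hy => hFp hy, hcard⟩

open Classical in
theorem exists_finset_counting {ι α : Type*} (J : Finset ι) (p : ι → α → Prop) (k : ℕ)
    (P : Finset α) :
    ∃ W : Finset α, P ⊆ W ∧ W.card ≤ P.card + J.card * k ∧
      ∀ j ∈ J, ∀ n ≤ k, n ≤ (W.filter (p j)).card ↔ (n : Cardinal) ≤ Cardinal.mk {y // p j y} := by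
  choose F hFp hcard using fun j => exists_finset_card_eq_min (p j) k
  refine ⟨P ∪ J.biUnion F, Finset.subset_union_left, ?_,
    fun j hj n hn => ⟨fun h => ?_, fun h => ?_⟩⟩
  · refine (Finset.card_union_le _ _).trans (Nat.add_le_add_left ?_ _)
    refine Finset.card_biUnion_le_card_mul J F k fun j _ => ?_
    exact_mod_cast (hcard j).trans_le (min_le_left _ _)
  · calc (n : Cardinal) ≤ ((P ∪ J.biUnion F).filter (p j)).card := by exact_mod_cast h
      _ = Cardinal.mk ↥((P ∪ J.biUnion F).filter (p j)) := Cardinal.mk_coe_finset.symm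
      _ ≤ Cardinal.mk {y // p j y} :=
        Cardinal.mk_subtype_mono fun y hy => (Finset.mem_filter.1 hy).2
  · have hle : n ≤ (F j).card := by
      exact_mod_cast (le_min (by exact_mod_cast hn) h).trans_eq (hcard j).symm
    refine hle.trans (Finset.card_le_card fun y hy => Finset.mem_filter.2 ⟨?_, hFp j y hy⟩)
    exact Finset.mem_union_right _ (Finset.mem_biUnion.2 ⟨j, hj, hy⟩)

theorem exists_injOn_lt_card {α : Type*} (W : Finset α) :
    ∃ idx : α → ℕ, Set.InjOn idx W ∧ ∀ y ∈ W, idx y < W.card := by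
  classical
  refine ⟨fun y => if h : y ∈ W then W.equivFin ⟨y, h⟩ else 0, fun y hy z hz hyz => ?_,
    fun y hy => by simp [hy]⟩
  simpa [Finset.mem_coe.1 hy, Finset.mem_coe.1 hz, Fin.val_inj] using hyz

theorem exists_testBit_iff (p : ℕ → Prop) (K : ℕ) :
    ∃ σ < 2 ^ K, ∀ n < K, σ.testBit n ↔ p n := by
  classical
  exact ⟨Nat.ofBits fun i : Fin K => decide (p i), Nat.ofBits_lt_two_pow _,
    fun n hn => by simp [Nat.testBit_ofBits_lt _ _ hn]⟩

/-! ### Star codes -/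

namespace StarCode

open DLConcept

/-- A bound on the codes of the concepts built with at most one constructor from numbers, roles and
concepts with codes below `M`. -/
def conceptBound (M : ℕ) : ℕ := Nat.pair 9 (Nat.pair M (Nat.pair M M))

/-- The number of slots of a star: one for a designated neighbour, and `M` for each pair of a role
code below `M` and a concept code below `conceptBound M`. -/
def slotBound (M : ℕ) : ℕ := M * conceptBound M * M + 1

/-- The number of bits of a star code. -/
def bitBound (M : ℕ) : ℕ := Nat.pair 2 (Nat.pair (slotBound M) (conceptBound M))

/-- A star is the type of an element (the set of concepts it belongs to) together with numbered
slots for some of its neighbours. It is coded as a bit set; `typeHas σ c` says that the concept with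
code `c` belongs to the type. -/
def typeHas (σ c : ℕ) : Bool := σ.testBit (Nat.pair 0 c)

/-- `slotHasRole σ i r`: the element is related by the role with code `r` to the neighbour in
slot `i`. -/
def slotHasRole (σ i r : ℕ) : Bool := σ.testBit (Nat.pair 1 (Nat.pair i r))

/-- `slotHasConcept σ i c`: the concept with code `c` belongs to the type of the neighbour in
slot `i`. -/
def slotHasConcept (σ i c : ℕ) : Bool := σ.testBit (Nat.pair 2 (Nat.pair i c))

theorem pair_lt_conceptBound {M k a : ℕ} (hk : k ≤ 9) (ha : a < Nat.pair M (Nat.pair M M)) :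
    Nat.pair k a < conceptBound M :=
  natPair_lt_natPair hk ha

theorem lt_conceptBound_of_lt {M c : ℕ} (hc : c < M) : c < conceptBound M := by
  refine hc.trans_le ((Nat.left_le_pair M (Nat.pair M M)).trans (Nat.right_le_pair 9 _))

theorem negCode_lt_conceptBound {M c : ℕ} (hc : c < M) : negCode c < conceptBound M :=
  pair_lt_conceptBound (by norm_num) (hc.trans_le (Nat.left_le_pair _ _))

theorem pair_pair_lt_conceptBound {M k a b : ℕ} (hk : k ≤ 9) (ha : a < M) (hb : b < M) :
    Nat.pair k (Nat.pair a b) < conceptBound M :=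
  pair_lt_conceptBound hk (natPair_lt_natPair ha.le (hb.trans_le (Nat.left_le_pair M M)))

theorem allCode_lt_conceptBound {M r c : ℕ} (hr : r < M) (hc : c < M) :
    allCode r c < conceptBound M :=
  pair_pair_lt_conceptBound (by norm_num) hr hc

theorem exCode_lt_conceptBound {M r c : ℕ} (hr : r < M) (hc : c < M) :
    exCode r c < conceptBound M :=
  pair_pair_lt_conceptBound (by norm_num) hr hc

theorem counted_lt_conceptBound {M k n r c : ℕ} (hk : k ≤ 9) (hn : n < M) (hr : r < M)
    (hc : c < M) : Nat.pair k (Nat.pair n (Nat.pair r c)) < conceptBound M :=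
  pair_lt_conceptBound hk (natPair_lt_natPair hn.le (natPair_lt_natPair hr.le hc))

theorem code_lt_of_quantified_lt {M k r c : ℕ} (h : Nat.pair k (Nat.pair r c) < M) :
    r < M ∧ c < M :=
  have hrc := (Nat.right_le_pair _ _).trans_lt h
  ⟨(Nat.left_le_pair _ _).trans_lt hrc, (Nat.right_le_pair _ _).trans_lt hrc⟩

theorem code_lt_of_counted_lt {M k n r c : ℕ} (h : Nat.pair k (Nat.pair n (Nat.pair r c)) < M) :
    n < M ∧ r < M ∧ c < M :=
  have hnrc := (Nat.right_le_pair _ _).trans_lt h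
  ⟨(Nat.left_le_pair _ _).trans_lt hnrc, code_lt_of_quantified_lt hnrc⟩

section Consistency

variable (M : ℕ) (T H trans : List ℕ) (σ : ℕ)

/-- The slots that hold a neighbour. -/
def IsLive (i : ℕ) : Prop := ∃ r < M, slotHasRole σ i r

/-- The number of neighbours in slots that are related by `r` and belong to `c`. -/
def slotCount (r c : ℕ) : ℕ :=
  Nat.count (fun i => slotHasRole σ i r ∧ slotHasConcept σ i c) (slotBound M)

/-- The type of a star respects the Boolean constructors. -/
def BooleanConsistent : Prop :=
  typeHas σ topCode ∧ ¬ typeHas σ botCode ∧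
    (∀ c < M, typeHas σ (negCode c) ↔ ¬ typeHas σ c) ∧
    (∀ c < M, ∀ d < M, typeHas σ (andCode c d) ↔ typeHas σ c ∧ typeHas σ d) ∧
    ∀ c < M, ∀ d < M, typeHas σ (orCode c d) ↔ typeHas σ c ∨ typeHas σ d

/-- The type of a star respects the terminology coded by `T`. -/
def TBoxConsistent : Prop :=
  ∀ e ∈ T, typeHas σ e.unpair.1 → typeHas σ e.unpair.2

/-- The slots of a star respect the role hierarchy coded by `H`. -/
def HierarchyConsistent : Prop :=
  ∀ r < M, ∀ s < M, SubRoleCode H r s → ∀ i < slotBound M, slotHasRole σ i r → slotHasRole σ i s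

/-- Quantified concepts agree with the neighbours in the slots of a star. -/
def QuantifierConsistent : Prop :=
  ∀ r < M, ∀ c < M, ∀ i < slotBound M, slotHasRole σ i r →
    (typeHas σ (allCode r c) → slotHasConcept σ i c) ∧
      (slotHasConcept σ i c → typeHas σ (exCode r c))

/-- Quantified concepts are propagated to and from the neighbours along transitive sub-roles; the
role with code `q` has the name `q / 2`. -/
def TransitivityConsistent : Prop :=
  ∀ q < M, q / 2 ∈ trans → ∀ s < M, SubRoleCode H q s → ∀ c < M, ∀ i < slotBound M,
    slotHasRole σ i q →
      (typeHas σ (allCode s c) → slotHasConcept σ i (allCode q c)) ∧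
        (slotHasConcept σ i (exCode q c) → typeHas σ (exCode s c))

/-- Existential and violated universal concepts are witnessed by a neighbour in some slot. -/
def WitnessConsistent : Prop :=
  ∀ r < M, ∀ c < M,
    (typeHas σ (exCode r c) → ∃ i < slotBound M, slotHasRole σ i r ∧ slotHasConcept σ i c) ∧
      (¬ typeHas σ (allCode r c) →
        ∃ i < slotBound M, slotHasRole σ i r ∧ ¬ slotHasConcept σ i c)

/-- Number restrictions agree with the number of neighbours in the slots of a star. -/
def CountingConsistent : Prop :=
  ∀ n < M, ∀ r < M, ∀ c < M,
    (typeHas σ (atleastCode n r c) ↔ n ≤ slotCount M σ r c) ∧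
      (typeHas σ (atmostCode n r c) ↔ slotCount M σ r c ≤ n)

/-- The local consistency of a star with respect to a terminology coded by `T`, a role hierarchy
coded by `H` and a list `trans` of transitive role names. -/
structure IsConsistent : Prop where
  boolean : BooleanConsistent M σ
  tbox : TBoxConsistent T σ
  hierarchy : HierarchyConsistent M H σ
  quantifier : QuantifierConsistent M σ
  transitivity : TransitivityConsistent M H trans σ
  witness : WitnessConsistent M σ
  counting : CountingConsistent M σ

variable {M T H trans σ} in
theorem isConsistent_iff : IsConsistent M T H trans σ ↔
    BooleanConsistent M σ ∧ TBoxConsistent T σ ∧ HierarchyConsistent M H σ ∧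
      QuantifierConsistent M σ ∧ TransitivityConsistent M H trans σ ∧ WitnessConsistent M σ ∧
      CountingConsistent M σ :=
  ⟨fun h => ⟨h.boolean, h.tbox, h.hierarchy, h.quantifier, h.transitivity, h.witness, h.counting⟩,
    fun ⟨hb, ht, hh, hq, htr, hw, hc⟩ => ⟨hb, ht, hh, hq, htr, hw, hc⟩⟩

end Consistency

/-- `Matches M σ i τ j`: slot `i` of `σ` and slot `j` of `τ` describe the same pair of neighbouring
elements from its two ends. -/
def Matches (M σ i τ j : ℕ) : Prop :=
  i < slotBound M ∧ j < slotBound M ∧ IsLive M σ i ∧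
    (∀ r < M, slotHasRole σ i r ↔ slotHasRole τ j (Role.invCode r)) ∧
    ∀ c < conceptBound M,
      (slotHasConcept σ i c ↔ typeHas τ c) ∧ (typeHas σ c ↔ slotHasConcept τ j c)

theorem Matches.symm {M σ i τ j : ℕ} (hM : Even M) (h : Matches M σ i τ j) :
    Matches M τ j σ i := by
  obtain ⟨hi, hj, ⟨r, hr, hrole⟩, hroles, hconcepts⟩ := h
  refine ⟨hj, hi, ⟨Role.invCode r, Role.invCode_lt hM hr, (hroles r hr).1 hrole⟩,
    fun s hs => ?_, fun c hc => ⟨(hconcepts c hc).2.symm, (hconcepts c hc).1.symm⟩⟩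
  rw [hroles _ (Role.invCode_lt hM hs), Role.invCode_invCode]

/-! ### Graphs of stars -/

/-- A graph of consistent stars: `star x` is the star at `x`, and `nb x i` is the neighbour of `x`
in slot `i`. -/
structure IsStarGraph (M : ℕ) (T H trans : List ℕ) {V : Type} (star : V → ℕ) (nb : V → ℕ → V) :
    Prop where
  isConsistent (x : V) : IsConsistent M T H trans (star x)
  nb_injective (x : V) : Function.Injective (nb x)
  exists_match (x : V) {i : ℕ} : i < slotBound M → IsLive M (star x) i →
    ∃ j, Matches M (star x) i (star (nb x i)) j ∧ nb (nb x i) j = x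

/-- The edges of a graph of stars. -/
def starEdge (M : ℕ) {V : Type} (star : V → ℕ) (nb : V → ℕ → V) (R : Role) (x y : V) : Prop :=
  R.code < M ∧ ∃ i < slotBound M, nb x i = y ∧ slotHasRole (star x) i R.code

/-- The labels of a graph of stars. -/
def starLabel {V : Type} (star : V → ℕ) (x : V) : Set DLConcept :=
  {C | typeHas (star x) C.code}

namespace IsStarGraph

variable {M : ℕ} {T H trans : List ℕ} {V : Type} {star : V → ℕ} {nb : V → ℕ → V}

theorem slotHasConcept_iff (h : IsStarGraph M T H trans star nb) {x : V} {i r c : ℕ}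
    (hi : i < slotBound M) (hr : r < M) (hrole : slotHasRole (star x) i r)
    (hc : c < conceptBound M) : slotHasConcept (star x) i c ↔ typeHas (star (nb x i)) c := by
  obtain ⟨j, hj, -⟩ := h.exists_match x hi ⟨r, hr, hrole⟩
  exact (hj.2.2.2.2 c hc).1

theorem starEdge_inv (h : IsStarGraph M T H trans star nb) (hM : Even M) {R : Role} {x y : V}
    (hxy : starEdge M star nb R x y) : starEdge M star nb R.Inv y x := by
  obtain ⟨hR, i, hi, rfl, hrole⟩ := hxy
  obtain ⟨j, ⟨-, hj, -, hroles, -⟩, hback⟩ := h.exists_match x hi ⟨_, hR, hrole⟩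
  refine ⟨R.code_Inv ▸ Role.invCode_lt hM hR, j, hj, hback, ?_⟩
  rw [Role.code_Inv]
  exact (hroles _ hR).1 hrole

theorem mk_successors (h : IsStarGraph M T H trans star nb) {R : Role} {C : DLConcept} {x : V}
    (hR : R.code < M) (hC : C.code < conceptBound M) :
    Cardinal.mk {y // starEdge M star nb R x y ∧ C ∈ starLabel star y} =
      slotCount M (star x) R.code C.code := by
  have himage : {y | starEdge M star nb R x y ∧ C ∈ starLabel star y} =
      nb x '' ((Finset.range (slotBound M)).filter fun i =>
        slotHasRole (star x) i R.code ∧ slotHasConcept (star x) i C.code) := by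
    ext y
    simp only [Set.mem_ofPred_eq, Set.mem_image, Finset.coe_filter, Finset.mem_range]
    constructor
    · rintro ⟨⟨-, i, hi, rfl, hrole⟩, hy⟩
      exact ⟨i, ⟨hi, hrole, (h.slotHasConcept_iff hi hR hrole hC).2 hy⟩, rfl⟩
    · rintro ⟨i, ⟨hi, hrole, hconcept⟩, rfl⟩
      exact ⟨⟨hR, i, hi, rfl, hrole⟩, (h.slotHasConcept_iff hi hR hrole hC).1 hconcept⟩
  change Cardinal.mk {y | starEdge M star nb R x y ∧ C ∈ starLabel star y} = _
  rw [himage, Cardinal.mk_image_eq (h.nb_injective x), Finset.coe_sort_coe,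
    Cardinal.mk_coe_finset, slotCount, Nat.count_eq_card_filter_range]

theorem all_step (h : IsStarGraph M T H trans star nb) {R : Role} {C : DLConcept} {x y : V}
    (hC : C.code < M) (hxy : starEdge M star nb R x y) (hx : .all R C ∈ starLabel star x) :
    C ∈ starLabel star y := by
  obtain ⟨hR, i, hi, rfl, hrole⟩ := hxy
  exact (h.slotHasConcept_iff hi hR hrole (lt_conceptBound_of_lt hC)).1
    (((h.isConsistent x).quantifier _ hR _ hC i hi hrole).1 hx)

theorem ex_step (h : IsStarGraph M T H trans star nb) {R : Role} {C : DLConcept} {x y : V}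
    (hC : C.code < M) (hxy : starEdge M star nb R x y) (hy : C ∈ starLabel star y) :
    .ex R C ∈ starLabel star x := by
  obtain ⟨hR, i, hi, rfl, hrole⟩ := hxy
  exact ((h.isConsistent x).quantifier _ hR _ hC i hi hrole).2
    ((h.slotHasConcept_iff hi hR hrole (lt_conceptBound_of_lt hC)).2 hy)

theorem all_witness (h : IsStarGraph M T H trans star nb) {R : Role} {C : DLConcept} {x : V}
    (hR : R.code < M) (hC : C.code < M) (hx : .all R C ∉ starLabel star x) :
    ∃ y, starEdge M star nb R x y ∧ C ∉ starLabel star y := by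
  obtain ⟨i, hi, hrole, hconcept⟩ := ((h.isConsistent x).witness _ hR _ hC).2 hx
  exact ⟨nb x i, ⟨hR, i, hi, rfl, hrole⟩,
    fun hy => hconcept ((h.slotHasConcept_iff hi hR hrole (lt_conceptBound_of_lt hC)).2 hy)⟩

theorem ex_witness (h : IsStarGraph M T H trans star nb) {R : Role} {C : DLConcept} {x : V}
    (hR : R.code < M) (hC : C.code < M) (hx : .ex R C ∈ starLabel star x) :
    ∃ y, starEdge M star nb R x y ∧ C ∈ starLabel star y := by
  obtain ⟨i, hi, hrole, hconcept⟩ := ((h.isConsistent x).witness _ hR _ hC).1 hx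
  exact ⟨nb x i, ⟨hR, i, hi, rfl, hrole⟩,
    (h.slotHasConcept_iff hi hR hrole (lt_conceptBound_of_lt hC)).1 hconcept⟩

variable {Rp : Set ℕ} {RIA : List (Role × Role)} {𝒯 : Terminology}

theorem starEdge_sub (h : IsStarGraph M T (riaCodes RIA) trans star nb) (hM : Even M)
    (hRIA : ∀ p ∈ RIA, p.2.code < M) {R S : Role} {x y : V} (hRS : SubRole RIA R S)
    (hxy : starEdge M star nb R x y) : starEdge M star nb S x y := by
  obtain ⟨hR, i, hi, rfl, hrole⟩ := hxy
  have hS := hRS.code_lt hM hRIA hR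
  exact ⟨hS, i, hi, rfl, (h.isConsistent x).hierarchy _ hR _ hS hRS.subRoleCode i hi hrole⟩

theorem trans_step (h : IsStarGraph M T (riaCodes RIA) trans star nb) (hM : Even M)
    (hRIA : ∀ p ∈ RIA, p.2.code < M) (htrans : ∀ r < M, r ∈ Rp → r ∈ trans) {Q S : Role}
    {C : DLConcept} {x y : V} (hC : C.code < M) (hQ : RTrans Rp Q) (hQS : SubRole RIA Q S)
    (hxy : starEdge M star nb Q x y) :
    (.all S C ∈ starLabel star x → .all Q C ∈ starLabel star y) ∧
      (.ex Q C ∈ starLabel star y → .ex S C ∈ starLabel star x) := by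
  obtain ⟨hQM, i, hi, rfl, hrole⟩ := hxy
  have htr : Q.code / 2 ∈ trans :=
    htrans _ ((Nat.div_le_self _ 2).trans_lt hQM) (rTrans_iff_code_div_two_mem.1 hQ)
  obtain ⟨hall, hex⟩ := (h.isConsistent x).transitivity _ hQM htr _ (hQS.code_lt hM hRIA hQM)
    hQS.subRoleCode _ hC i hi hrole
  exact ⟨fun hx => (h.slotHasConcept_iff hi hQM hrole (allCode_lt_conceptBound hQM hC)).1 (hall hx),
    fun hy => hex ((h.slotHasConcept_iff hi hQM hrole (exCode_lt_conceptBound hQM hC)).2 hy)⟩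

theorem isTableau (h : IsStarGraph M (termCodes 𝒯) (riaCodes RIA) trans star nb) (hM : Even M)
    (hRIA : ∀ p ∈ RIA, p.2.code < M) (htrans : ∀ r < M, r ∈ Rp → r ∈ trans) :
    IsTableau Rp RIA 𝒯 {C | C.code < M} (starEdge M star nb) (starLabel star) where
  edge_inv := h.starEdge_inv hM
  edge_sub := h.starEdge_sub hM hRIA
  tbox {C D x} hCD hC := by
    have hbox := (h.isConsistent x).tbox _ (pair_code_mem_termCodes hCD)
    rw [Nat.unpair_pair] at hbox
    exact hbox hC
  top x := (h.isConsistent x).boolean.1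
  bot x := (h.isConsistent x).boolean.2.1
  neg {C x} hC := (h.isConsistent x).boolean.2.2.1 _ ((ImmediateSub.neg C).code_le.trans_lt hC)
  and {C D x} hC := (h.isConsistent x).boolean.2.2.2.1
    _ ((ImmediateSub.and_left C D).code_le.trans_lt hC)
    _ ((ImmediateSub.and_right C D).code_le.trans_lt hC)
  or {C D x} hC := (h.isConsistent x).boolean.2.2.2.2
    _ ((ImmediateSub.or_left C D).code_le.trans_lt hC)
    _ ((ImmediateSub.or_right C D).code_le.trans_lt hC)
  all_step := h.all_step
  ex_step := h.ex_step
  all_trans hC hQ hQS hxy := (h.trans_step hM hRIA htrans hC hQ hQS hxy).1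
  ex_trans hC hQ hQS hxy := (h.trans_step hM hRIA htrans hC hQ hQS hxy).2
  all_witness hRC := h.all_witness (code_lt_of_quantified_lt hRC).1 (code_lt_of_quantified_lt hRC).2
  ex_witness hRC := h.ex_witness (code_lt_of_quantified_lt hRC).1 (code_lt_of_quantified_lt hRC).2
  atleast hRC := by
    obtain ⟨hn, hR, hC⟩ := code_lt_of_counted_lt hRC
    rw [h.mk_successors hR (lt_conceptBound_of_lt hC), Nat.cast_le]
    exact ((h.isConsistent _).counting _ hn _ hR _ hC).1
  atmost hRC := by
    obtain ⟨hn, hR, hC⟩ := code_lt_of_counted_lt hRC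
    rw [h.mk_successors hR (lt_conceptBound_of_lt hC), Nat.cast_le]
    exact ((h.isConsistent _).counting _ hn _ hR _ hC).2

end IsStarGraph

/-! ### Mosaics -/

/-- A mosaic: a set of consistent stars in which every occupied slot matches a slot of a star in the
set. -/
def IsMosaic (M : ℕ) (T H trans : List ℕ) (S : Set ℕ) : Prop :=
  ∀ σ ∈ S, IsConsistent M T H trans σ ∧
    ∀ i < slotBound M, IsLive M σ i → ∃ τ ∈ S, ∃ j < slotBound M, Matches M σ i τ j

theorem IsMosaic.exists_isStarGraph {M : ℕ} {T H trans : List ℕ} {S : Set ℕ} (hM : Even M)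
    (hS : IsMosaic M T H trans S) {σ₀ : ℕ} (hσ₀ : σ₀ ∈ S) :
    ∃ (star : List ℕ → ℕ) (nb : List ℕ → ℕ → List ℕ),
      IsStarGraph M T H trans star nb ∧ star [] = σ₀ := by
  let Match (σ : S) (i : ℕ) (τ : S) (j : ℕ) : Prop := Matches M σ i τ j
  let root : S := ⟨σ₀, hσ₀⟩
  refine ⟨fun x => (unravelNode Match root x).1, unravelNb Match root,
    ⟨fun x => (hS _ (Subtype.coe_prop _)).1, unravelNb_injective Match root,
      fun x i hi hlive => ?_⟩, by simp [unravelNode, root]⟩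
  obtain ⟨τ, hτ, j, -, hmatch⟩ := (hS _ (Subtype.coe_prop _)).2 i hi hlive
  exact exists_match_unravelNb (Match := Match) (fun _ _ _ _ h => h.symm hM)
    ⟨(⟨τ, hτ⟩, j), hmatch⟩

theorem IsMosaic.satisfiableT {Rp : Set ℕ} {RIA : List (Role × Role)} {𝒯 : Terminology}
    {M : ℕ} {trans : List ℕ} {S : Set ℕ} (hM : Even M)
    (hS : IsMosaic M (termCodes 𝒯) (riaCodes RIA) trans S)
    (hRIA : ∀ p ∈ RIA, p.2.code < M) (htrans : ∀ r < M, r ∈ Rp → r ∈ trans)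
    (hT : ∀ p ∈ 𝒯, p.1.IsSHIQ Rp RIA ∧ p.2.IsSHIQ Rp RIA)
    (hTM : ∀ p ∈ 𝒯, p.1.code < M ∧ p.2.code < M) {C : DLConcept} (hC : C.IsSHIQ Rp RIA)
    (hCM : C.code < M) {σ : ℕ} (hσ : σ ∈ S) (hσC : typeHas σ C.code) :
    SatisfiableT Rp RIA 𝒯 C := by
  obtain ⟨star, nb, hgraph, rfl⟩ := hS.exists_isStarGraph hM hσ
  exact (hgraph.isTableau hM hRIA htrans).satisfiableT
    (fun _ _ hsub hlt => hsub.code_le.trans_lt hlt) hT hTM hC hCM hσC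

/-! ### The stars of a model -/

theorem exists_star (M : ℕ) (t : ℕ → Prop) (ρ κ : ℕ → ℕ → Prop) :
    ∃ σ < 2 ^ bitBound M, (∀ c < conceptBound M, typeHas σ c ↔ t c) ∧
      (∀ i < slotBound M, ∀ r < M, slotHasRole σ i r ↔ ρ i r) ∧
      ∀ i < slotBound M, ∀ c < conceptBound M, slotHasConcept σ i c ↔ κ i c := by
  obtain ⟨σ, hσ, hbits⟩ := exists_testBit_iff (fun n => match n.unpair.1, n.unpair.2 with
    | 0, c => t c
    | 1, m => ρ m.unpair.1 m.unpair.2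
    | _, m => κ m.unpair.1 m.unpair.2) (bitBound M)
  refine ⟨σ, hσ, fun c hc => ?_, fun i hi r hr => ?_, fun i hi c hc => ?_⟩
  · have hlt : Nat.pair 0 c < bitBound M :=
      natPair_lt_natPair (Nat.zero_le 2) (hc.trans_le (Nat.right_le_pair _ _))
    simpa [typeHas] using hbits _ hlt
  · have hlt : Nat.pair 1 (Nat.pair i r) < bitBound M :=
      natPair_lt_natPair one_le_two (natPair_lt_natPair hi.le (lt_conceptBound_of_lt hr))
    simpa [slotHasRole] using hbits _ hlt
  · have hlt : Nat.pair 2 (Nat.pair i c) < bitBound M :=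
      natPair_lt_natPair le_rfl (natPair_lt_natPair hi.le hc)
    simpa [slotHasConcept] using hbits _ hlt

open Classical in
/-- The star code `σ` represents the element `x` of the interpretation `I`: its type is that of `x`,
and its slots, numbered by `idx`, hold the elements of `W`, which contains enough successors of `x`
to count up to `M`. -/
structure Represents (I : Interp) (M : ℕ) (x : I.Dom) (W : Finset I.Dom) (idx : I.Dom → ℕ)
    (σ : ℕ) : Prop where
  idx_injOn : Set.InjOn idx W
  idx_lt {y : I.Dom} : y ∈ W → idx y < slotBound M
  typeHas_iff {c : ℕ} : c < conceptBound M → (typeHas σ c ↔ x ∈ I.cSem (ofCode c))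
  slotHasRole_iff {y : I.Dom} {r : ℕ} : y ∈ W → r < M →
    (slotHasRole σ (idx y) r ↔ I.rSem (Role.ofCode r) x y)
  slotHasConcept_iff {y : I.Dom} {c : ℕ} : y ∈ W → c < conceptBound M →
    (slotHasConcept σ (idx y) c ↔ y ∈ I.cSem (ofCode c))
  exists_of_slotHasRole {i r : ℕ} : i < slotBound M → r < M → slotHasRole σ i r →
    ∃ y ∈ W, idx y = i
  le_card_iff {r c n : ℕ} : r < M → c < conceptBound M → n ≤ M →
    (n ≤ (W.filter fun y => I.rSem (Role.ofCode r) x y ∧ y ∈ I.cSem (ofCode c)).card ↔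
      (n : Cardinal) ≤ Cardinal.mk {y // I.rSem (Role.ofCode r) x y ∧ y ∈ I.cSem (ofCode c)})

theorem exists_represents (I : Interp) (M : ℕ) (x p : I.Dom) :
    ∃ σ < 2 ^ bitBound M, ∃ W idx, p ∈ W ∧ Represents I M x W idx σ := by
  obtain ⟨W, hpW, hcard, hW⟩ := exists_finset_counting
    (Finset.range M ×ˢ Finset.range (conceptBound M))
    (fun j y => I.rSem (Role.ofCode j.1) x y ∧ y ∈ I.cSem (ofCode j.2)) M {p}
  obtain ⟨idx, hinj, hidx⟩ := exists_injOn_lt_card W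
  have hWB : W.card ≤ slotBound M := by
    simpa [slotBound, add_comm] using hcard
  obtain ⟨σ, hσ, htype, hrole, hconcept⟩ := exists_star M (fun c => x ∈ I.cSem (ofCode c))
    (fun i r => ∃ y ∈ W, idx y = i ∧ I.rSem (Role.ofCode r) x y)
    (fun i c => ∃ y ∈ W, idx y = i ∧ y ∈ I.cSem (ofCode c))
  have hidxB {y : I.Dom} (hy : y ∈ W) : idx y < slotBound M := (hidx y hy).trans_le hWB
  have at_idx (P : I.Dom → Prop) {y : I.Dom} (hy : y ∈ W) :
      (∃ z ∈ W, idx z = idx y ∧ P z) ↔ P y :=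
    ⟨fun ⟨z, hz, hzy, hPz⟩ => hinj hz hy hzy ▸ hPz, fun hPy => ⟨y, hy, rfl, hPy⟩⟩
  refine ⟨σ, hσ, W, idx, hpW (Finset.mem_singleton_self p), hinj, hidxB, htype _,
    fun hy hr => (hrole _ (hidxB hy) _ hr).trans (at_idx _ hy),
    fun hy hc => (hconcept _ (hidxB hy) _ hc).trans (at_idx _ hy), fun hi hr h => ?_,
    fun {r c n} hr hc hn => ?_⟩
  · obtain ⟨y, hy, hyi, -⟩ := (hrole _ hi _ hr).1 h
    exact ⟨y, hy, hyi⟩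
  · convert hW (r, c) (by simp [hr, hc]) n hn

namespace Represents

variable {I : Interp} {M : ℕ} {x : I.Dom} {W : Finset I.Dom} {idx : I.Dom → ℕ} {σ : ℕ}

theorem typeHas_code_iff (h : Represents I M x W idx σ) {C : DLConcept}
    (hC : C.code < conceptBound M) : typeHas σ C.code ↔ x ∈ I.cSem C := by
  rw [h.typeHas_iff hC, ofCode_code]

theorem slotCount_eq (h : Represents I M x W idx σ) {r c : ℕ} (hr : r < M)
    (hc : c < conceptBound M) :
    open Classical in slotCount M σ r c =
      (W.filter fun y => I.rSem (Role.ofCode r) x y ∧ y ∈ I.cSem (ofCode c)).card := by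
  classical
  have himage : (Finset.range (slotBound M)).filter
      (fun i => slotHasRole σ i r ∧ slotHasConcept σ i c) =
      (W.filter fun y => I.rSem (Role.ofCode r) x y ∧ y ∈ I.cSem (ofCode c)).image idx := by
    ext i
    simp only [Finset.mem_filter, Finset.mem_range, Finset.mem_image]
    constructor
    · rintro ⟨hi, hrole, hconcept⟩
      obtain ⟨y, hy, rfl⟩ := h.exists_of_slotHasRole hi hr hrole
      exact ⟨y, ⟨hy, (h.slotHasRole_iff hy hr).1 hrole, (h.slotHasConcept_iff hy hc).1 hconcept⟩,
        rfl⟩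
    · rintro ⟨y, ⟨hy, hrole, hconcept⟩, rfl⟩
      exact ⟨h.idx_lt hy, (h.slotHasRole_iff hy hr).2 hrole,
        (h.slotHasConcept_iff hy hc).2 hconcept⟩
  rw [slotCount, Nat.count_eq_card_filter_range, himage, Finset.card_image_of_injOn]
  exact h.idx_injOn.mono (Finset.coe_subset.2 (Finset.filter_subset _ _))

theorem le_slotCount_iff (h : Represents I M x W idx σ) {r c n : ℕ} (hr : r < M)
    (hc : c < conceptBound M) (hn : n ≤ M) :
    n ≤ slotCount M σ r c ↔
      (n : Cardinal) ≤ Cardinal.mk {y // I.rSem (Role.ofCode r) x y ∧ y ∈ I.cSem (ofCode c)} := by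
  rw [h.slotCount_eq hr hc, h.le_card_iff hr hc hn]

theorem exists_slot_of_rSem (h : Represents I M x W idx σ) {r c : ℕ} (hr : r < M)
    (hc : c < conceptBound M) {y : I.Dom} (hxy : I.rSem (Role.ofCode r) x y)
    (hy : y ∈ I.cSem (ofCode c)) :
    ∃ z ∈ W, slotHasRole σ (idx z) r ∧ slotHasConcept σ (idx z) c := by
  classical
  have hcard : ((1 : ℕ) : Cardinal) ≤
      Cardinal.mk {y // I.rSem (Role.ofCode r) x y ∧ y ∈ I.cSem (ofCode c)} := by
    rw [Nat.cast_one, Cardinal.one_le_iff_ne_zero, Cardinal.mk_ne_zero_iff]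
    exact ⟨y, hxy, hy⟩
  obtain ⟨z, hz⟩ := Finset.card_pos.1 ((h.le_card_iff hr hc (Nat.one_le_of_lt hr)).2 hcard)
  obtain ⟨hzW, hzr, hzc⟩ := Finset.mem_filter.1 hz
  exact ⟨z, hzW, (h.slotHasRole_iff hzW hr).2 hzr, (h.slotHasConcept_iff hzW hc).2 hzc⟩

theorem booleanConsistent (h : Represents I M x W idx σ) : BooleanConsistent M σ := by
  have hconst {k : ℕ} (hk : k < 9) : k < conceptBound M := hk.trans_le (Nat.left_le_pair 9 _)
  refine ⟨?_, ?_, fun c hc => ?_, fun c hc d hd => ?_, fun c hc d hd => ?_⟩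
  · rw [h.typeHas_iff (hconst (by decide)), ofCode_topCode]
    exact Set.mem_univ x
  · rw [h.typeHas_iff (hconst (by decide)), ofCode_botCode]
    exact Set.notMem_empty x
  · rw [h.typeHas_iff (negCode_lt_conceptBound hc), h.typeHas_iff (lt_conceptBound_of_lt hc),
      ofCode_negCode]
    exact Iff.rfl
  · rw [andCode, h.typeHas_iff (pair_pair_lt_conceptBound (by norm_num) hc hd),
      h.typeHas_iff (lt_conceptBound_of_lt hc), h.typeHas_iff (lt_conceptBound_of_lt hd),
      ← andCode, ofCode_andCode]
    exact Iff.rfl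
  · rw [orCode, h.typeHas_iff (pair_pair_lt_conceptBound (by norm_num) hc hd),
      h.typeHas_iff (lt_conceptBound_of_lt hc), h.typeHas_iff (lt_conceptBound_of_lt hd),
      ← orCode, ofCode_orCode]
    exact Iff.rfl

theorem tBoxConsistent (h : Represents I M x W idx σ) {𝒯 : Terminology} (hT : I.ModelsT 𝒯)
    (hTM : ∀ p ∈ 𝒯, p.1.code < M ∧ p.2.code < M) : TBoxConsistent (termCodes 𝒯) σ := by
  intro e he
  obtain ⟨p, hp, rfl⟩ := List.mem_map.1 he
  rw [Nat.unpair_pair, h.typeHas_iff (lt_conceptBound_of_lt (hTM p hp).1),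
    h.typeHas_iff (lt_conceptBound_of_lt (hTM p hp).2), ofCode_code, ofCode_code]
  exact fun hx => hT p hp hx

theorem hierarchyConsistent (h : Represents I M x W idx σ) {RIA : List (Role × Role)}
    (hI : I.ModelsRH RIA) : HierarchyConsistent M (riaCodes RIA) σ := by
  intro r hr s hs hrs i hi hrole
  obtain ⟨y, hy, rfl⟩ := h.exists_of_slotHasRole hi hr hrole
  rw [h.slotHasRole_iff hy hr] at hrole
  rw [h.slotHasRole_iff hy hs]
  exact hI _ _ (subRoleCode_iff.1 hrs) _ _ hrole

theorem quantifierConsistent (h : Represents I M x W idx σ) : QuantifierConsistent M σ := by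
  intro r hr c hc i hi hrole
  obtain ⟨y, hy, rfl⟩ := h.exists_of_slotHasRole hi hr hrole
  rw [h.slotHasRole_iff hy hr] at hrole
  rw [h.typeHas_iff (allCode_lt_conceptBound hr hc), ofCode_allCode,
    h.typeHas_iff (exCode_lt_conceptBound hr hc), ofCode_exCode,
    h.slotHasConcept_iff hy (lt_conceptBound_of_lt hc)]
  exact ⟨fun hx => hx y hrole, fun hyc => ⟨y, hrole, hyc⟩⟩

theorem transitivityConsistent (h : Represents I M x W idx σ) {Rp : Set ℕ} (hgood : I.Good Rp)
    {RIA : List (Role × Role)} (hI : I.ModelsRH RIA) {trans : List ℕ}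
    (htrans : ∀ r ∈ trans, r ∈ Rp) : TransitivityConsistent M (riaCodes RIA) trans σ := by
  intro q hq hqtrans s hs hqs c hc i hi hrole
  have hQ : RTrans Rp (Role.ofCode q) := by
    rw [rTrans_iff_code_div_two_mem, Role.code_ofCode]
    exact htrans _ hqtrans
  obtain ⟨y, hy, rfl⟩ := h.exists_of_slotHasRole hi hq hrole
  rw [h.slotHasRole_iff hy hq] at hrole
  have hstep {z : I.Dom} (hyz : I.rSem (Role.ofCode q) y z) : I.rSem (Role.ofCode s) x z :=
    hI _ _ (subRoleCode_iff.1 hqs) _ _ (hgood.rSem_trans hQ hrole hyz)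
  rw [h.typeHas_iff (allCode_lt_conceptBound hs hc), ofCode_allCode,
    h.slotHasConcept_iff hy (allCode_lt_conceptBound hq hc), ofCode_allCode,
    h.typeHas_iff (exCode_lt_conceptBound hs hc), ofCode_exCode,
    h.slotHasConcept_iff hy (exCode_lt_conceptBound hq hc), ofCode_exCode]
  exact ⟨fun hx z hyz => hx z (hstep hyz), fun ⟨z, hyz, hz⟩ => ⟨z, hstep hyz, hz⟩⟩

theorem witnessConsistent (h : Represents I M x W idx σ) : WitnessConsistent M σ := by
  intro r hr c hc
  have hcN := lt_conceptBound_of_lt hc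
  rw [h.typeHas_iff (exCode_lt_conceptBound hr hc), ofCode_exCode,
    h.typeHas_iff (allCode_lt_conceptBound hr hc), ofCode_allCode]
  constructor
  · rintro ⟨y, hxy, hy⟩
    obtain ⟨z, hz, hrole, hconcept⟩ := h.exists_slot_of_rSem hr hcN hxy hy
    exact ⟨idx z, h.idx_lt hz, hrole, hconcept⟩
  · intro hall
    obtain ⟨y, hxy, hy⟩ : ∃ y, I.rSem (Role.ofCode r) x y ∧ y ∉ I.cSem (ofCode c) := by
      by_contra! hno
      exact hall hno
    have hneg := negCode_lt_conceptBound hc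
    have hmem {z : I.Dom} : z ∈ I.cSem (ofCode (negCode c)) ↔ z ∉ I.cSem (ofCode c) := by
      rw [ofCode_negCode]; exact Iff.rfl
    obtain ⟨z, hz, hrole, hconcept⟩ := h.exists_slot_of_rSem hr hneg hxy (hmem.2 hy)
    rw [h.slotHasConcept_iff hz hneg, hmem, ← h.slotHasConcept_iff hz hcN] at hconcept
    exact ⟨idx z, h.idx_lt hz, hrole, hconcept⟩

theorem countingConsistent (h : Represents I M x W idx σ) : CountingConsistent M σ := by
  intro n hn r hr c hc
  have hcN := lt_conceptBound_of_lt hc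
  rw [atleastCode, atmostCode, h.typeHas_iff (counted_lt_conceptBound (by norm_num) hn hr hc),
    h.typeHas_iff (counted_lt_conceptBound (by norm_num) hn hr hc), ← atleastCode, ← atmostCode,
    ofCode_atleastCode, ofCode_atmostCode, h.le_slotCount_iff hr hcN hn.le]
  refine ⟨Iff.rfl, ?_⟩
  rw [← not_lt, Nat.lt_iff_add_one_le, h.le_slotCount_iff hr hcN hn, Nat.cast_succ,
    Cardinal.natCast_add_one_le_iff, not_lt]
  exact Iff.rfl

theorem isConsistent (h : Represents I M x W idx σ) {Rp : Set ℕ} (hgood : I.Good Rp)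
    {RIA : List (Role × Role)} (hI : I.ModelsRH RIA) {𝒯 : Terminology} (hT : I.ModelsT 𝒯)
    (hTM : ∀ p ∈ 𝒯, p.1.code < M ∧ p.2.code < M) {trans : List ℕ} (htrans : ∀ r ∈ trans, r ∈ Rp) :
    IsConsistent M (termCodes 𝒯) (riaCodes RIA) trans σ where
  boolean := h.booleanConsistent
  tbox := h.tBoxConsistent hT hTM
  hierarchy := h.hierarchyConsistent hI
  quantifier := h.quantifierConsistent
  transitivity := h.transitivityConsistent hgood hI htrans
  witness := h.witnessConsistent
  counting := h.countingConsistent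

theorem matches_slot (h : Represents I M x W idx σ) (hM : Even M) {y : I.Dom} {W' : Finset I.Dom}
    {idx' : I.Dom → ℕ} {τ : ℕ} (h' : Represents I M y W' idx' τ) (hy : y ∈ W) (hx : x ∈ W')
    (hlive : IsLive M σ (idx y)) : Matches M σ (idx y) τ (idx' x) := by
  refine ⟨h.idx_lt hy, h'.idx_lt hx, hlive, fun r hr => ?_, fun c hc => ⟨?_, ?_⟩⟩
  · rw [h.slotHasRole_iff hy hr, h'.slotHasRole_iff hx (Role.invCode_lt hM hr),
      Role.ofCode_invCode, I.rSem_Inv]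
  · rw [h.slotHasConcept_iff hy hc, h'.typeHas_iff hc]
  · rw [h.typeHas_iff hc, h'.slotHasConcept_iff hx hc]

end Represents

/-- The set of star codes that represent some element of `I`. -/
def starsOf (I : Interp) (M : ℕ) : Set ℕ :=
  {σ | σ < 2 ^ bitBound M ∧ ∃ x W idx, Represents I M x W idx σ}

theorem isMosaic_starsOf {I : Interp} {M : ℕ} (hM : Even M) {Rp : Set ℕ} (hgood : I.Good Rp)
    {RIA : List (Role × Role)} (hI : I.ModelsRH RIA) {𝒯 : Terminology} (hT : I.ModelsT 𝒯)
    (hTM : ∀ p ∈ 𝒯, p.1.code < M ∧ p.2.code < M) {trans : List ℕ} (htrans : ∀ r ∈ trans, r ∈ Rp) :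
    IsMosaic M (termCodes 𝒯) (riaCodes RIA) trans (starsOf I M) := by
  rintro σ ⟨-, x, W, idx, h⟩
  refine ⟨h.isConsistent hgood hI hT hTM htrans, fun i hi hlive => ?_⟩
  obtain ⟨r, hr, hrole⟩ := hlive
  obtain ⟨y, hy, rfl⟩ := h.exists_of_slotHasRole hi hr hrole
  obtain ⟨τ, hτ, W', idx', hx, h'⟩ := exists_represents I M y x
  exact ⟨τ, ⟨hτ, y, W', idx', h'⟩, idx' x, h'.idx_lt hx, h.matches_slot hM h' hy hx ⟨r, hr, hrole⟩⟩

/-- The set of star codes of at most `K` bits whose indicator function has the code `w`. -/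
def family (K w : ℕ) : Set ℕ := {σ | σ < 2 ^ K ∧ w.testBit σ}

theorem exists_family_eq {K : ℕ} {S : Set ℕ} (hS : ∀ σ ∈ S, σ < 2 ^ K) :
    ∃ w < 2 ^ 2 ^ K, family K w = S := by
  obtain ⟨w, hw, hbits⟩ := exists_testBit_iff (· ∈ S) (2 ^ K)
  refine ⟨w, hw, Set.ext fun σ => ⟨fun h => (hbits σ h.1).1 h.2, fun h => ⟨hS σ h, ?_⟩⟩⟩
  exact (hbits σ (hS σ h)).2 h

/-- Some mosaic contains a star whose type has the concept with code `c`; this is satisfiability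
as a bounded search. -/
def HasMosaic (M : ℕ) (T H trans : List ℕ) (c : ℕ) : Prop :=
  ∃ w < 2 ^ 2 ^ bitBound M, IsMosaic M T H trans (family (bitBound M) w) ∧
    ∃ σ < 2 ^ bitBound M, w.testBit σ ∧ typeHas σ c

theorem hasMosaic_iff_satisfiableT {Rp : Set ℕ} {RIA : List (Role × Role)} {𝒯 : Terminology}
    {M : ℕ} {trans : List ℕ} (hM : Even M) (hRIA : ∀ p ∈ RIA, p.2.code < M)
    (htrans : ∀ r, r ∈ trans ↔ r < M ∧ r ∈ Rp)
    (hT : ∀ p ∈ 𝒯, p.1.IsSHIQ Rp RIA ∧ p.2.IsSHIQ Rp RIA)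
    (hTM : ∀ p ∈ 𝒯, p.1.code < M ∧ p.2.code < M) {C : DLConcept} (hC : C.IsSHIQ Rp RIA)
    (hCM : C.code < M) :
    HasMosaic M (termCodes 𝒯) (riaCodes RIA) trans C.code ↔ SatisfiableT Rp RIA 𝒯 C := by
  constructor
  · rintro ⟨w, -, hmosaic, σ, hσ, hσw, hσC⟩
    exact hmosaic.satisfiableT hM hRIA (fun r hr hrp => (htrans r).2 ⟨hr, hrp⟩) hT hTM hC hCM
      ⟨hσ, hσw⟩ hσC
  · rintro ⟨I, hgood, hI, hIT, x, hx⟩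
    obtain ⟨w, hw, hfamily⟩ := exists_family_eq (S := starsOf I M) fun σ hσ => hσ.1
    obtain ⟨σ, hσ, W, idx, -, hrep⟩ := exists_represents I M x x
    have hσw : σ ∈ family (bitBound M) w := hfamily ▸ ⟨hσ, x, W, idx, hrep⟩
    refine ⟨w, hw, hfamily ▸ ?_, σ, hσ, hσw.2,
      (hrep.typeHas_code_iff (lt_conceptBound_of_lt hCM)).2 hx⟩
    exact isMosaic_starsOf hM hgood hI hIT hTM fun r hr => ((htrans r).1 hr).2

end StarCode

/-! ### Primitive recursive predicates -/

attribute [fun_prop] Primrec PrimrecPred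

attribute [fun_prop] Primrec.comp Primrec.id Primrec.const Primrec.pair

section Primrec

variable {α β γ : Type*} [Primcodable α] [Primcodable β] [Primcodable γ]

@[fun_prop]
theorem primrec_fst {f : α → β × γ} (hf : Primrec f) : Primrec fun a => (f a).1 :=
  Primrec.fst.comp hf

@[fun_prop]
theorem primrec_snd {f : α → β × γ} (hf : Primrec f) : Primrec fun a => (f a).2 :=
  Primrec.snd.comp hf

@[fun_prop]
theorem primrec_add {f g : α → ℕ} (hf : Primrec f) (hg : Primrec g) :
    Primrec fun a => f a + g a :=
  Primrec.nat_add.comp hf hg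

@[fun_prop]
theorem primrec_sub {f g : α → ℕ} (hf : Primrec f) (hg : Primrec g) :
    Primrec fun a => f a - g a :=
  Primrec.nat_sub.comp hf hg

@[fun_prop]
theorem primrec_mul {f g : α → ℕ} (hf : Primrec f) (hg : Primrec g) :
    Primrec fun a => f a * g a :=
  Primrec.nat_mul.comp hf hg

@[fun_prop]
theorem primrec_div {f g : α → ℕ} (hf : Primrec f) (hg : Primrec g) :
    Primrec fun a => f a / g a :=
  Primrec.nat_div.comp hf hg

@[fun_prop]
theorem primrec_mod {f g : α → ℕ} (hf : Primrec f) (hg : Primrec g) :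
    Primrec fun a => f a % g a :=
  Primrec.nat_mod.comp hf hg

@[fun_prop]
theorem primrec_pow {f g : α → ℕ} (hf : Primrec f) (hg : Primrec g) :
    Primrec fun a => f a ^ g a :=
  (Primrec₂.unpaired'.1 Nat.Primrec.pow).comp hf hg

@[fun_prop]
theorem primrec_pair {f g : α → ℕ} (hf : Primrec f) (hg : Primrec g) :
    Primrec fun a => Nat.pair (f a) (g a) :=
  Primrec₂.natPair.comp hf hg

@[fun_prop]
theorem primrec_unpair {f : α → ℕ} (hf : Primrec f) : Primrec fun a => (f a).unpair :=
  Primrec.unpair.comp hf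

@[fun_prop]
theorem primrecPred_eq {f g : α → β} (hf : Primrec f) (hg : Primrec g) :
    PrimrecPred fun a => f a = g a := by
  classical exact Primrec.eq.comp hf hg

@[fun_prop]
theorem primrecPred_lt {f g : α → ℕ} (hf : Primrec f) (hg : Primrec g) :
    PrimrecPred fun a => f a < g a :=
  Primrec.nat_lt.comp hf hg

@[fun_prop]
theorem primrecPred_le {f g : α → ℕ} (hf : Primrec f) (hg : Primrec g) :
    PrimrecPred fun a => f a ≤ g a :=
  Primrec.nat_le.comp hf hg

@[fun_prop]
theorem primrecPred_not {p : α → Prop} (hp : PrimrecPred p) : PrimrecPred fun a => ¬ p a :=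
  hp.not

@[fun_prop]
theorem primrecPred_and {p q : α → Prop} (hp : PrimrecPred p) (hq : PrimrecPred q) :
    PrimrecPred fun a => p a ∧ q a :=
  hp.and hq

@[fun_prop]
theorem primrecPred_or {p q : α → Prop} (hp : PrimrecPred p) (hq : PrimrecPred q) :
    PrimrecPred fun a => p a ∨ q a :=
  hp.or hq

@[fun_prop]
theorem primrecPred_imp {p q : α → Prop} (hp : PrimrecPred p) (hq : PrimrecPred q) :
    PrimrecPred fun a => p a → q a :=
  (hp.not.or hq).of_eq fun _ => imp_iff_not_or.symm

@[fun_prop]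
theorem primrecPred_iff {p q : α → Prop} (hp : PrimrecPred p) (hq : PrimrecPred q) :
    PrimrecPred fun a => p a ↔ q a :=
  ((primrecPred_imp hp hq).and (primrecPred_imp hq hp)).of_eq fun _ => iff_def.symm

@[fun_prop]
theorem primrecPred_forall_mem {L : α → List β} {p : α → β → Prop} (hL : Primrec L)
    (hp : PrimrecPred fun x : α × β => p x.1 x.2) : PrimrecPred fun a => ∀ b ∈ L a, p a b := by
  have hswap : PrimrecRel fun b a => p a b := hp.comp (Primrec.snd.pair Primrec.fst)
  exact hswap.forall_mem_list.comp hL Primrec.id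

@[fun_prop]
theorem primrecPred_exists_mem {L : α → List β} {p : α → β → Prop} (hL : Primrec L)
    (hp : PrimrecPred fun x : α × β => p x.1 x.2) : PrimrecPred fun a => ∃ b ∈ L a, p a b := by
  have hswap : PrimrecRel fun b a => p a b := hp.comp (Primrec.snd.pair Primrec.fst)
  exact hswap.exists_mem_list.comp hL Primrec.id

@[fun_prop]
theorem primrecPred_mem {f : α → β} {L : α → List β} (hf : Primrec f) (hL : Primrec L) :
    PrimrecPred fun a => f a ∈ L a :=
  (primrecPred_exists_mem (p := fun a b => b = f a) hL (by fun_prop)).of_eq fun a => by simp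

@[fun_prop]
theorem primrecPred_forall_lt {n : α → ℕ} {p : α → ℕ → Prop} (hn : Primrec n)
    (hp : PrimrecPred fun x : α × ℕ => p x.1 x.2) : PrimrecPred fun a => ∀ b < n a, p a b :=
  (primrecPred_forall_mem (Primrec.list_range.comp hn) hp).of_eq fun a => by
    simp only [List.mem_range]

@[fun_prop]
theorem primrecPred_exists_lt {n : α → ℕ} {p : α → ℕ → Prop} (hn : Primrec n)
    (hp : PrimrecPred fun x : α × ℕ => p x.1 x.2) : PrimrecPred fun a => ∃ b < n a, p a b :=
  (primrecPred_exists_mem (Primrec.list_range.comp hn) hp).of_eq fun a => by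
    simp only [List.mem_range]

@[fun_prop]
theorem primrec_ite {p : α → Prop} {f g : α → β} [DecidablePred p] (hp : PrimrecPred p)
    (hf : Primrec f) (hg : Primrec g) : Primrec fun a => if p a then f a else g a :=
  Primrec.ite hp hf hg

@[fun_prop]
theorem primrec_count {n : α → ℕ} {p : α → ℕ → Prop} [∀ a, DecidablePred (p a)] (hn : Primrec n)
    (hp : PrimrecPred fun x : α × ℕ => p x.1 x.2) : Primrec fun a => Nat.count (p a) (n a) := by
  have hstep : Primrec₂ fun (a : α) (x : ℕ × ℕ) => x.2 + if p a x.1 then 1 else 0 := by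
    have hp' : PrimrecPred fun y : α × ℕ × ℕ => p y.1 y.2.1 := hp.comp
      (f := fun y : α × ℕ × ℕ => (y.1, y.2.1)) (by fun_prop)
    exact primrec_add (by fun_prop) (primrec_ite hp' (by fun_prop) (by fun_prop))
  refine (Primrec.nat_rec' hn (Primrec.const 0) hstep).of_eq fun a => ?_
  induction n a with
  | zero => rfl
  | succ k ih => rw [Nat.count_succ, ← ih]

@[fun_prop]
theorem primrec_testBit {f g : α → ℕ} (hf : Primrec f) (hg : Primrec g) :
    Primrec fun a => (f a).testBit (g a) :=
  have hbit : PrimrecPred fun a => f a / 2 ^ g a % 2 = 1 := by fun_prop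
  hbit.decide.of_eq fun a => Nat.testBit_eq_decide_div_mod_eq.symm

end Primrec

theorem reflTransGen_iff_forall_testBit {r : ℕ → ℕ → Prop} {B a b : ℕ}
    (hr : ∀ x y, r x y → y < B) (ha : a < B) :
    Relation.ReflTransGen r a b ↔ ∀ u < 2 ^ B, u.testBit a →
      (∀ x < B, ∀ y < B, u.testBit x → r x y → u.testBit y) → b < B ∧ u.testBit b := by
  constructor
  · intro h u _ hua hclosed
    induction h with
    | refl => exact ⟨ha, hua⟩
    | tail _ hxy ih => exact ⟨hr _ _ hxy, hclosed _ ih.1 _ (hr _ _ hxy) ih.2 hxy⟩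
  · intro h
    obtain ⟨u, hu, hbits⟩ := exists_testBit_iff (Relation.ReflTransGen r a) B
    obtain ⟨hb, hub⟩ := h u hu ((hbits a ha).2 .refl)
      fun x hx y hy hux hxy => (hbits y hy).2 (((hbits x hx).1 hux).tail hxy)
    exact (hbits b hb).1 hub

theorem lt_of_subRoleCode_step {H : List ℕ} {r s : ℕ}
    (h : Nat.pair r s ∈ H ∨ Nat.pair (Role.invCode r) (Role.invCode s) ∈ H) :
    s < natListCode H + 2 := by
  rcases h with h | h
  · have := lt_natListCode_of_mem h
    have := Nat.right_le_pair r s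
    lia
  · have := lt_natListCode_of_mem h
    have := Nat.right_le_pair (Role.invCode r) (Role.invCode s)
    have hs := Role.invCode_le (Role.invCode s)
    rw [Role.invCode_invCode] at hs
    lia

@[fun_prop]
theorem primrec_natListCode : Primrec natListCode :=
  Primrec.encode.of_eq fun l => (natListCode_eq_encode l).symm

@[fun_prop]
theorem Role.primrec_invCode : Primrec Role.invCode := by
  unfold Role.invCode
  fun_prop

section SubRoleCode

variable {α : Type*} [Primcodable α] {H : α → List ℕ} {r s : α → ℕ}

@[fun_prop]
theorem primrecPred_subRoleCode (hH : Primrec H) (hr : Primrec r) (hs : Primrec s) :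
    PrimrecPred fun a => SubRoleCode (H a) (r a) (s a) := by
  have hsearch : PrimrecPred fun a => ∀ u < 2 ^ (natListCode (H a) + 2 + r a), u.testBit (r a) →
      (∀ x < natListCode (H a) + 2 + r a, ∀ y < natListCode (H a) + 2 + r a, u.testBit x →
        Nat.pair x y ∈ H a ∨ Nat.pair (Role.invCode x) (Role.invCode y) ∈ H a → u.testBit y) →
      s a < natListCode (H a) + 2 + r a ∧ u.testBit (s a) := by
    fun_prop
  exact hsearch.of_eq fun a => (reflTransGen_iff_forall_testBit
    (fun _ _ h => (lt_of_subRoleCode_step h).trans_le (Nat.le_add_right _ _)) (by lia)).symm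

end SubRoleCode

namespace StarCode

@[fun_prop]
theorem primrec_conceptBound : Primrec conceptBound := by
  unfold conceptBound
  fun_prop

@[fun_prop]
theorem primrec_slotBound : Primrec slotBound := by
  unfold slotBound
  fun_prop

@[fun_prop]
theorem primrec_bitBound : Primrec bitBound := by
  unfold bitBound
  fun_prop

section Primrec

variable {α : Type*} [Primcodable α] {M σ τ i j r c : α → ℕ} {T H trans : α → List ℕ}

@[fun_prop]
theorem primrec_typeHas (hσ : Primrec σ) (hc : Primrec c) :
    Primrec fun a => typeHas (σ a) (c a) := by
  unfold typeHas
  fun_prop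

@[fun_prop]
theorem primrec_slotHasRole (hσ : Primrec σ) (hi : Primrec i) (hr : Primrec r) :
    Primrec fun a => slotHasRole (σ a) (i a) (r a) := by
  unfold slotHasRole
  fun_prop

@[fun_prop]
theorem primrec_slotHasConcept (hσ : Primrec σ) (hi : Primrec i) (hc : Primrec c) :
    Primrec fun a => slotHasConcept (σ a) (i a) (c a) := by
  unfold slotHasConcept
  fun_prop

@[fun_prop]
theorem primrec_slotCount (hM : Primrec M) (hσ : Primrec σ) (hr : Primrec r) (hc : Primrec c) :
    Primrec fun a => slotCount (M a) (σ a) (r a) (c a) := by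
  unfold slotCount
  fun_prop

@[fun_prop]
theorem primrecPred_isLive (hM : Primrec M) (hσ : Primrec σ) (hi : Primrec i) :
    PrimrecPred fun a => IsLive (M a) (σ a) (i a) := by
  unfold IsLive
  fun_prop

@[fun_prop]
theorem primrecPred_booleanConsistent (hM : Primrec M) (hσ : Primrec σ) :
    PrimrecPred fun a => BooleanConsistent (M a) (σ a) := by
  unfold BooleanConsistent DLConcept.topCode DLConcept.botCode DLConcept.negCode
    DLConcept.andCode DLConcept.orCode
  fun_prop

@[fun_prop]
theorem primrecPred_tBoxConsistent (hT : Primrec T) (hσ : Primrec σ) :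
    PrimrecPred fun a => TBoxConsistent (T a) (σ a) := by
  unfold TBoxConsistent
  fun_prop

@[fun_prop]
theorem primrecPred_hierarchyConsistent (hM : Primrec M) (hH : Primrec H) (hσ : Primrec σ) :
    PrimrecPred fun a => HierarchyConsistent (M a) (H a) (σ a) := by
  unfold HierarchyConsistent
  fun_prop

@[fun_prop]
theorem primrecPred_quantifierConsistent (hM : Primrec M) (hσ : Primrec σ) :
    PrimrecPred fun a => QuantifierConsistent (M a) (σ a) := by
  unfold QuantifierConsistent DLConcept.allCode DLConcept.exCode
  fun_prop

@[fun_prop]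
theorem primrecPred_transitivityConsistent (hM : Primrec M) (hH : Primrec H)
    (htrans : Primrec trans) (hσ : Primrec σ) :
    PrimrecPred fun a => TransitivityConsistent (M a) (H a) (trans a) (σ a) := by
  unfold TransitivityConsistent DLConcept.allCode DLConcept.exCode
  fun_prop

@[fun_prop]
theorem primrecPred_witnessConsistent (hM : Primrec M) (hσ : Primrec σ) :
    PrimrecPred fun a => WitnessConsistent (M a) (σ a) := by
  unfold WitnessConsistent DLConcept.allCode DLConcept.exCode
  fun_prop

@[fun_prop]
theorem primrecPred_countingConsistent (hM : Primrec M) (hσ : Primrec σ) :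
    PrimrecPred fun a => CountingConsistent (M a) (σ a) := by
  unfold CountingConsistent DLConcept.atleastCode DLConcept.atmostCode
  fun_prop

@[fun_prop]
theorem primrecPred_isConsistent (hM : Primrec M) (hT : Primrec T) (hH : Primrec H)
    (htrans : Primrec trans) (hσ : Primrec σ) :
    PrimrecPred fun a => IsConsistent (M a) (T a) (H a) (trans a) (σ a) := by
  simp only [isConsistent_iff]
  fun_prop

@[fun_prop]
theorem primrecPred_matches (hM : Primrec M) (hσ : Primrec σ) (hi : Primrec i) (hτ : Primrec τ)
    (hj : Primrec j) : PrimrecPred fun a => Matches (M a) (σ a) (i a) (τ a) (j a) := by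
  unfold Matches
  fun_prop

@[fun_prop]
theorem primrecPred_isMosaic_family {K w : α → ℕ} (hM : Primrec M) (hT : Primrec T)
    (hH : Primrec H) (htrans : Primrec trans) (hK : Primrec K) (hw : Primrec w) :
    PrimrecPred fun a => IsMosaic (M a) (T a) (H a) (trans a) (family (K a) (w a)) := by
  simp only [IsMosaic, family, Set.mem_ofPred_eq, and_imp, and_assoc]
  fun_prop

@[fun_prop]
theorem primrecPred_hasMosaic (hM : Primrec M) (hT : Primrec T) (hH : Primrec H)
    (htrans : Primrec trans) (hc : Primrec c) :
    PrimrecPred fun a => HasMosaic (M a) (T a) (H a) (trans a) (c a) := by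
  unfold HasMosaic
  fun_prop

end Primrec

end StarCode

/-! ### The decision procedure -/

theorem ofNat_natListCode (l : List ℕ) : Denumerable.ofNat (List ℕ) (natListCode l) = l := by
  rw [natListCode_eq_encode, Denumerable.ofNat_encode]

theorem exists_computable_filter_range {S : Set ℕ} (hS : ComputablePred (· ∈ S)) :
    ∃ L : ℕ → List ℕ, Computable L ∧ ∀ n m, m ∈ L n ↔ m < n ∧ m ∈ S := by
  obtain ⟨_, hdecide⟩ := hS
  have hstep : Computable₂ fun (_ : ℕ) (x : ℕ × List ℕ) =>
      bif decide (x.1 ∈ S) then x.1 :: x.2 else x.2 := by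
    have hfst : Computable fun y : ℕ × ℕ × List ℕ => y.2.1 := .comp .fst .snd
    have hsnd : Computable fun y : ℕ × ℕ × List ℕ => y.2.2 := .comp .snd .snd
    exact Computable.cond (hdecide.comp hfst) (Computable.list_cons.comp hfst hsnd) hsnd
  refine ⟨_, Computable.nat_rec Computable.id (Computable.const []) hstep, fun n m => ?_⟩
  induction n with
  | zero => simp
  | succ n ih =>
    by_cases hn : n ∈ S
    · simp only [id, hn, decide_true, cond_true, List.mem_cons] at ih ⊢
      grind
    · simp only [id, hn, decide_false, cond_false] at ih ⊢
      grind

theorem termCode_eq (𝒯 : Terminology) : termCode 𝒯 = natListCode (termCodes 𝒯) := rfl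

theorem riaCode_eq (RIA : List (Role × Role)) : riaCode RIA = natListCode (riaCodes RIA) := rfl

theorem code_lt_of_mem_terminology {𝒯 : Terminology} {p : DLConcept × DLConcept} (hp : p ∈ 𝒯) :
    p.1.code < termCode 𝒯 ∧ p.2.code < termCode 𝒯 :=
  have hlt := lt_natListCode_of_mem (pair_code_mem_termCodes hp)
  ⟨(Nat.left_le_pair _ _).trans_lt hlt, (Nat.right_le_pair _ _).trans_lt hlt⟩

theorem code_lt_of_mem_ria {RIA : List (Role × Role)} {p : Role × Role} (hp : p ∈ RIA) :
    p.2.code < riaCode RIA :=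
  (Nat.right_le_pair p.1.code p.2.code).trans_lt (lt_natListCode_of_mem (l := riaCodes RIA)
    (pair_mem_riaCodes.2 (by simpa using hp)))

/-- A bound on all codes that occur in the satisfiability problem with code `n`. It is even, so that
the role codes below it are closed under `Role.invCode`. -/
def codeBound (n : ℕ) : ℕ := 2 * (n + 1)

/-- The answer to the satisfiability problem with code `n`, where `L m` lists the transitive role
names below `m`. -/
def HasMosaicAt (L : ℕ → List ℕ) (n : ℕ) : Prop :=
  StarCode.HasMosaic (codeBound n) (Denumerable.ofNat (List ℕ) n.unpair.2.unpair.1)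
    (Denumerable.ofNat (List ℕ) n.unpair.2.unpair.2) (L (codeBound n)) n.unpair.1

theorem computablePred_hasMosaicAt {L : ℕ → List ℕ} (hL : Computable L) :
    ComputablePred (HasMosaicAt L) := by
  classical
  have hbound : Computable codeBound :=
    Primrec.to_comp (by unfold codeBound; fun_prop)
  have hofNat : Primrec (Denumerable.ofNat (List ℕ)) := Primrec.ofNat _
  have hprim : PrimrecPred fun x : ℕ × List ℕ => StarCode.HasMosaic (codeBound x.1)
      (Denumerable.ofNat (List ℕ) x.1.unpair.2.unpair.1)
      (Denumerable.ofNat (List ℕ) x.1.unpair.2.unpair.2) x.2 x.1.unpair.1 := by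
    unfold codeBound
    fun_prop
  have hdecide := hprim.decide.to_comp.comp (Computable.id.pair (hL.comp hbound))
  exact hdecide.computablePred.of_eq fun _ => Iff.rfl

theorem hasMosaicAt_iff_satisfiableT {Rp : Set ℕ} {L : ℕ → List ℕ}
    (hL : ∀ n r, r ∈ L n ↔ r < n ∧ r ∈ Rp) {RIA : List (Role × Role)} {𝒯 : Terminology}
    {C : DLConcept} (hC : C.IsSHIQ Rp RIA)
    (hT : ∀ p ∈ 𝒯, p.1.IsSHIQ Rp RIA ∧ p.2.IsSHIQ Rp RIA) :
    HasMosaicAt L (Nat.pair C.code (Nat.pair (termCode 𝒯) (riaCode RIA))) ↔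
      SatisfiableT Rp RIA 𝒯 C := by
  have hCn := Nat.left_le_pair C.code (Nat.pair (termCode 𝒯) (riaCode RIA))
  have hpair := Nat.right_le_pair C.code (Nat.pair (termCode 𝒯) (riaCode RIA))
  have hTn := (Nat.left_le_pair (termCode 𝒯) (riaCode RIA)).trans hpair
  have hRIAn := (Nat.right_le_pair (termCode 𝒯) (riaCode RIA)).trans hpair
  have hbound {c n : ℕ} (hc : c ≤ n) : c < codeBound n := by unfold codeBound; lia
  simp only [HasMosaicAt, Nat.unpair_pair, termCode_eq, riaCode_eq, ofNat_natListCode]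
  exact StarCode.hasMosaic_iff_satisfiableT (even_two_mul _)
    (fun p hp => hbound ((code_lt_of_mem_ria hp).le.trans hRIAn)) (hL _) hT
    (fun p hp => (code_lt_of_mem_terminology hp).imp (fun h => hbound (h.le.trans hTn))
      fun h => hbound (h.le.trans hTn)) hC (hbound hCn)

theorem subsumesT_iff_not_satisfiableT {Rp : Set ℕ} {RIA : List (Role × Role)} {𝒯 : Terminology}
    {C D : DLConcept} :
    SubsumesT Rp RIA 𝒯 C D ↔ ¬ SatisfiableT Rp RIA 𝒯 (.and C (.neg D)) := by
  constructor
  · rintro h ⟨I, hgood, hI, hT, x, hxC, hxD⟩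
    exact hxD (h I hgood hI hT hxC)
  · intro h I hgood hI hT x hxC
    by_contra hxD
    exact h ⟨I, hgood, hI, hT, x, hxC, hxD⟩

/-- The code of the satisfiability problem for `C ⊓ ¬D` when `n` is the code of the subsumption
problem for `C` and `D`. -/
def counterexampleCode (n : ℕ) : ℕ :=
  Nat.pair (DLConcept.andCode n.unpair.1 (DLConcept.negCode n.unpair.2.unpair.1))
    n.unpair.2.unpair.2

theorem primrec_counterexampleCode : Primrec counterexampleCode := by
  unfold counterexampleCode DLConcept.andCode DLConcept.negCode
  fun_prop

theorem counterexampleCode_pair (C D : DLConcept) (k : ℕ) :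
    counterexampleCode (Nat.pair C.code (Nat.pair D.code k)) =
      Nat.pair (DLConcept.and C (DLConcept.neg D)).code k := by
  simp only [counterexampleCode, Nat.unpair_pair]
  rfl

theorem shiq_decidable_general (Rp : Set ℕ) (hRp : ComputablePred (· ∈ Rp)) :
    (∃ f : ℕ → Bool, Computable f ∧
      ∀ (C : DLConcept) (T : Terminology) (RIA : List (Role × Role)),
        C.IsSHIQ Rp RIA →
        (∀ p ∈ T, p.1.IsSHIQ Rp RIA ∧ p.2.IsSHIQ Rp RIA) →
        (f (Nat.pair C.code (Nat.pair (termCode T) (riaCode RIA))) = true ↔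
          SatisfiableT Rp RIA T C)) ∧
    (∃ g : ℕ → Bool, Computable g ∧
      ∀ (C D : DLConcept) (T : Terminology) (RIA : List (Role × Role)),
        C.IsSHIQ Rp RIA → D.IsSHIQ Rp RIA →
        (∀ p ∈ T, p.1.IsSHIQ Rp RIA ∧ p.2.IsSHIQ Rp RIA) →
        (g (Nat.pair C.code (Nat.pair D.code (Nat.pair (termCode T) (riaCode RIA)))) = true ↔
          SubsumesT Rp RIA T C D)) := by
  obtain ⟨L, hL, hmem⟩ := exists_computable_filter_range hRp
  obtain ⟨_, hsat⟩ := computablePred_hasMosaicAt hL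
  refine ⟨⟨_, hsat, fun C T RIA hC hT => ?_⟩,
    ⟨fun n => !decide (HasMosaicAt L (counterexampleCode n)),
      Primrec.not.to_comp.comp (hsat.comp primrec_counterexampleCode.to_comp),
      fun C D T RIA hC hD hT => ?_⟩⟩
  · rw [decide_eq_true_iff, hasMosaicAt_iff_satisfiableT hmem hC hT]
  · rw [Bool.not_eq_true', decide_eq_false_iff_not, counterexampleCode_pair,
      hasMosaicAt_iff_satisfiableT hmem (C := .and C (.neg D)) ⟨hC, hD⟩ hT,
      subsumesT_iff_not_satisfiableT]

theorem computablePred_mem_evenRp : ComputablePred (· ∈ evenRp) := by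
  have heven : PrimrecPred fun n : ℕ => n % 2 = 0 := by fun_prop
  exact heven.computablePred

/-- **Theorem 3: decidability of SHIQ.** Over the fixed, effectively
encoded signature, there is a computable function deciding satisfiability of
SHIQ-concepts w.r.t. terminologies and role hierarchies, and hence also one
deciding subsumption. -/
theorem shiq_decidable :
    (∃ f : ℕ → Bool, Computable f ∧
      ∀ (C : DLConcept) (T : Terminology) (RIA : List (Role × Role)),
        C.IsSHIQ evenRp RIA →
        (∀ p ∈ T, p.1.IsSHIQ evenRp RIA ∧ p.2.IsSHIQ evenRp RIA) →
        (f (Nat.pair C.code (Nat.pair (termCode T) (riaCode RIA))) = true ↔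
          SatisfiableT evenRp RIA T C)) ∧
    (∃ g : ℕ → Bool, Computable g ∧
      ∀ (C D : DLConcept) (T : Terminology) (RIA : List (Role × Role)),
        C.IsSHIQ evenRp RIA → D.IsSHIQ evenRp RIA →
        (∀ p ∈ T, p.1.IsSHIQ evenRp RIA ∧ p.2.IsSHIQ evenRp RIA) →
        (g (Nat.pair C.code (Nat.pair D.code (Nat.pair (termCode T) (riaCode RIA)))) = true ↔
          SubsumesT evenRp RIA T C D)) :=
  shiq_decidable_general evenRp computablePred_mem_evenRp
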